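/- arXiv:2005.07679 — 3 statements merged into one kernel-verified Lean document; each statement's English description precedes it below -/
import Mathlib

section
/- Let D ⊂ ℝ^N and D̃ ⊂ ℝ^M be bounded domains with Lipschitz boundary and let g : D → D̃ satisfy ‖g‖_{D,1} ≤ K. Then for every real a > 1 and every ε ∈ (0,1) there are constants C_a(D), C_a(D̃) (depending also on K) and a constant C_{1/ε} depending on ε such that for every u ∈ Λ^a(D̃̄) with g ∈ Λ^a(D̄): |u∘g|_{D,a} ≤ C_a(D)·C_a(D̃)·( C_{1/ε}·|u|_{D̃,a}·‖g‖_{D,1+ε}^{1/(1+ε)} + ‖u‖_{D̃,1}·|g|_{D,a} + sup_{D̃}|u| ). -/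
/-!
The estimate is proved through differences of high order.  Put `k = ⌈a⌉ - 1`.

* A function with finite norm of order `a` on the whole space has differences of order `k + 2` of
  size `|y|^a`.  Smoothing it at dyadic scales, stopping at scale `ρ` and taking a Taylor polynomial
  of degree `k + 1` approximates it on a ball of radius `ρ` up to `O(ρ^a)`
  (`exists_polyMap_approx`).

* Along a segment of step `y` in `D`, the map `g` is close to a polynomial curve `p`, and `u` is
  close to a polynomial `q` on the ball which `g` reaches there.  The composition `q ∘ p` has degree
  at most `(k + 1)²`, so it is annihilated by a difference of order `(k + 1)² + 1`, and the same
  difference of `u ∘ g` is bounded by a constant times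
  `(|u|_a (sup |∇g|)^a + sup |∇u| |g|_a) |y|^a`.  The gradient of `q` is controlled by `sup |∇u|`,
  because the uniform interior cone condition of `Dt` provides a ball of comparable radius inside
  `Dt`, on which `q` is close to `u`; a bound for a polynomial on that ball gives bounds on larger
  balls (`norm_fwdDiff_comp_le`).

* On a bounded Lipschitz domain, bounds for differences along segments of `D` suffice for an
  extension.  Near a point of the closure the function is averaged in the directions of an interior
  cone; the resulting dyadic pieces are cut off at their own scale, glued by a partition of unity,
  and summed over the whole space (`exists_chart`, `hzNorm_tsum_le`, `exists_extension`).

This gives the bound with `(sup |∇g|)^a` (`hzNormOn_comp_le`).  Since `a > 1 ≥ θ` with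
`θ = 1 / (1 + ε)`, it is at most `K^(a - θ) ‖g‖_{1+ε}^θ`.
-/

open scoped ENNReal NNReal ComplexConjugate
open Set Metric

noncomputable section

/-- Zygmund second-difference seminorm of order `s` (intended for `0 < s ≤ 1`). -/
def zygSemi {E F : Type*} [NormedAddCommGroup E] [NormedAddCommGroup F]
    (s : ℝ) (f : E → F) : ℝ≥0∞ :=
  ⨆ (y : E) (_ : y ≠ 0) (x : E),
    (‖f (x + 2 • y) + f x - 2 • f (x + y)‖₊ : ℝ≥0∞) / (‖y‖₊ : ℝ≥0∞) ^ s

/-- Hölder–Zygmund norm `|f|_{E,r}` for `r > 0`: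
`|f|_r = Σ_{k ≤ ⌈r⌉-1} sup‖∇^k f‖ + Zygmund seminorm of order `r-(⌈r⌉-1)` of `∇^{⌈r⌉-1} f`,
which agrees with the inductive definition `|f|_r = sup|f| + |∇f|_{r-1}`. -/
def hzNorm {E F : Type*} [NormedAddCommGroup E] [NormedSpace ℝ E]
    [NormedAddCommGroup F] [NormedSpace ℝ F] (r : ℝ) (f : E → F) : ℝ≥0∞ :=
  (∑ k ∈ Finset.range (⌈r⌉₊ - 1 + 1), ⨆ x, (‖iteratedFDeriv ℝ k f x‖₊ : ℝ≥0∞))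
    + zygSemi (r - (⌈r⌉₊ - 1 : ℕ)) (iteratedFDeriv ℝ (⌈r⌉₊ - 1) f)

/-- Hölder–Zygmund norm `|f|_{S,r}` on a set `S`: infimum of `|g|_{E,r}` over all
extensions `g` of `f|_S` (such an extension with finite norm is automatically
`C^{⌈r⌉-1}`, so we restrict to those representatives). -/
def hzNormOn {E F : Type*} [NormedAddCommGroup E] [NormedSpace ℝ E]
    [NormedAddCommGroup F] [NormedSpace ℝ F] (S : Set E) (r : ℝ) (f : E → F) : ℝ≥0∞ :=
  ⨅ (g : E → F) (_ : Set.EqOn f g S) (_ : ContDiff ℝ ((⌈r⌉₊ - 1 : ℕ) : ℕ∞) g),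
    hzNorm r g

/-- Hölder norm `‖f‖_{S,a}`, `a = k + α` with `k = ⌊a⌋` and `0 ≤ α < 1`. -/
def holderNorm {E F : Type*} [NormedAddCommGroup E] [NormedSpace ℝ E]
    [NormedAddCommGroup F] [NormedSpace ℝ F] (S : Set E) (a : ℝ) (f : E → F) : ℝ≥0∞ :=
  (∑ k ∈ Finset.range (⌊a⌋₊ + 1), ⨆ x ∈ S, (‖iteratedFDeriv ℝ k f x‖₊ : ℝ≥0∞))
    + (if a = ⌊a⌋₊ then 0 else
        ⨆ (x ∈ S) (y ∈ S) (_ : x ≠ y),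
          (‖iteratedFDeriv ℝ (⌊a⌋₊) f x - iteratedFDeriv ℝ (⌊a⌋₊) f y‖₊ : ℝ≥0∞)
            / (‖x - y‖₊ : ℝ≥0∞) ^ (a - (⌊a⌋₊ : ℝ)))


open scoped RealInnerProductSpace

/-- Sup norm of a function over a set. -/
def supNormOn {E F : Type*} [NormedAddCommGroup F] (S : Set E) (f : E → F) : ℝ≥0∞ :=
  ⨆ x ∈ S, (‖f x‖₊ : ℝ≥0∞)

/-- `D` has Lipschitz boundary: near every boundary point, `D` is the subgraph
of a Lipschitz function in a suitable direction. -/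
def LipschitzBoundary {N : ℕ} (D : Set (EuclideanSpace ℝ (Fin N))) : Prop :=
  ∀ p ∈ frontier D, ∃ v : EuclideanSpace ℝ (Fin N), ‖v‖ = 1 ∧
    ∃ (K : ℝ≥0) (φ : EuclideanSpace ℝ (Fin N) → ℝ), LipschitzWith K φ ∧
      ∃ r : ℝ, 0 < r ∧ ∀ x ∈ Metric.ball p r,
        (x ∈ D ↔ ⟪x, v⟫ < φ (x - ⟪x, v⟫ • v))

section

/-! ### Mollification by averages -/

open MeasureTheory
open scoped Convolution ContDiff

/-- Derivatives of a convolution fall on the smooth factor, and only the values of `w` on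
`x - tsupport ψ` matter. -/
lemma norm_iteratedFDeriv_convolution_le {E : Type} [NormedAddCommGroup E]
    [InnerProductSpace ℝ E] [FiniteDimensional ℝ E] [MeasurableSpace E] [BorelSpace E]
    {A : Type} [NormedAddCommGroup A] [NormedSpace ℝ A] (w : E → A) (hw : Continuous w)
    (l : ℕ) : ∀ {B G : Type} [NormedAddCommGroup B] [NormedSpace ℝ B]
    [NormedAddCommGroup G] [NormedSpace ℝ G] (L : A →L[ℝ] B →L[ℝ] G)
    (ψ : E → B) (_ : ContDiff ℝ ∞ ψ) (_ : HasCompactSupport ψ) (x : E) (b : ℝ) (_ : 0 ≤ b)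
    (_ : ∀ t ∈ tsupport ψ, ‖w (x - t)‖ ≤ b),
    ‖iteratedFDeriv ℝ l (w ⋆[L, volume] ψ) x‖ ≤
      ‖L‖ * b * ∫ t, ‖iteratedFDeriv ℝ l ψ t‖ := by
  induction l with
  | zero =>
    intro B G _ _ _ _ L ψ hψ hc x b hb0 hb
    simp only [norm_iteratedFDeriv_zero]
    rw [convolution_eq_swap, ← integral_const_mul]
    refine norm_integral_le_of_norm_le ?_ (Filter.Eventually.of_forall fun t => ?_)
    · exact ((hψ.continuous.integrable_of_hasCompactSupport hc).norm).const_mul _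
    · by_cases ht : t ∈ tsupport ψ
      · calc ‖L (w (x - t)) (ψ t)‖ ≤ ‖L‖ * ‖w (x - t)‖ * ‖ψ t‖ := L.le_opNorm₂ _ _
          _ ≤ ‖L‖ * b * ‖ψ t‖ := by gcongr; exact hb t ht
      · have : ψ t = 0 := image_eq_zero_of_notMem_tsupport ht
        simp [this]
  | succ l ih =>
    intro B G _ _ _ _ L ψ hψ hc x b hb0 hb
    have hd : fderiv ℝ (w ⋆[L, volume] ψ) = w ⋆[L.precompR E, volume] fderiv ℝ ψ := by
      ext1 y
      exact (hc.hasFDerivAt_convolution_right L hw.locallyIntegrable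
        (hψ.of_le (by simp)) y).fderiv
    rw [← norm_iteratedFDeriv_fderiv, hd]
    have hψ' : ContDiff ℝ ∞ (fderiv ℝ ψ) := hψ.fderiv_right (by simp)
    have h := ih (L.precompR E) (fderiv ℝ ψ) hψ' (hc.fderiv ℝ) x b hb0
      (fun t ht => hb t (tsupport_fderiv_subset ℝ ht))
    simp only [norm_iteratedFDeriv_fderiv] at h
    refine h.trans ?_
    gcongr
    exact ContinuousLinearMap.norm_precompR_le _ _

section Avg

variable {E : Type} [NormedAddCommGroup E] [InnerProductSpace ℝ E] [FiniteDimensional ℝ E]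
  [MeasurableSpace E] [BorelSpace E] {F : Type} [NormedAddCommGroup F] [NormedSpace ℝ F]

/-- The average of `w` around `x` at scale `t` with respect to the kernel `φ`. -/
def avg (φ : E → ℝ) (t : ℝ) (w : E → F) (x : E) : F := ∫ y, φ y • w (x + t • y)

lemma avg_one_eq (φ : E → ℝ) (w : E → F) :
    avg φ 1 w = w ⋆[(ContinuousLinearMap.lsmul ℝ ℝ).flip, volume] (fun y => φ (-y)) := by
  ext1 x
  rw [convolution_eq_swap, avg, ← integral_neg_eq_self]
  simp [sub_eq_add_neg]

lemma avg_eq_comp (φ : E → ℝ) {t : ℝ} (ht : 0 < t) (w : E → F) :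
    avg φ t w = avg φ 1 (fun z => w (t • z)) ∘ ((t⁻¹ : ℝ) • ContinuousLinearMap.id ℝ E) := by
  ext1 x
  simp [avg, smul_smul, ht.ne']

lemma avg_one_contDiff {φ : E → ℝ} (hφ : ContDiff ℝ ∞ φ) (hc : HasCompactSupport φ)
    {w : E → F} (hw : Continuous w) : ContDiff ℝ ∞ (avg φ 1 w) := by
  rw [avg_one_eq]
  exact HasCompactSupport.contDiff_convolution_right _
    (hc.comp_homeomorph (Homeomorph.neg E)) hw.locallyIntegrable (hφ.comp contDiff_neg)

lemma avg_contDiff {φ : E → ℝ} (hφ : ContDiff ℝ ∞ φ) (hc : HasCompactSupport φ)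
    {t : ℝ} (ht : 0 < t) {w : E → F} (hw : Continuous w) : ContDiff ℝ ∞ (avg φ t w) := by
  rw [avg_eq_comp φ ht]
  exact (avg_one_contDiff hφ hc (hw.comp (continuous_const_smul t))).comp
    (ContinuousLinearMap.contDiff _)

/-- The constant controlling the `l`-th derivative of averages with kernel `φ`. -/
def avgConst (φ : E → ℝ) (l : ℕ) : ℝ := ∫ t, ‖iteratedFDeriv ℝ l (fun y => φ (-y)) t‖

lemma avgConst_nonneg (φ : E → ℝ) (l : ℕ) : 0 ≤ avgConst φ l :=
  integral_nonneg fun _ => norm_nonneg _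

lemma norm_iteratedFDeriv_avg_le {φ : E → ℝ} (hφ : ContDiff ℝ ∞ φ) (hc : HasCompactSupport φ)
    {t : ℝ} (ht : 0 < t) {w : E → F} (hw : Continuous w) (l : ℕ) (x : E) {b : ℝ} (hb0 : 0 ≤ b)
    (hb : ∀ y ∈ tsupport φ, ‖w (x + t • y)‖ ≤ b) :
    ‖iteratedFDeriv ℝ l (avg φ t w) x‖ ≤ avgConst φ l * (t ^ l)⁻¹ * b := by
  have hw' : Continuous (fun z => w (t • z)) := hw.comp (continuous_const_smul t)
  have hφ' : ContDiff ℝ ∞ (fun y => φ (-y)) := hφ.comp contDiff_neg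
  have hc' : HasCompactSupport (fun y => φ (-y)) := hc.comp_homeomorph (Homeomorph.neg E)
  rw [avg_eq_comp φ ht, ContinuousLinearMap.iteratedFDeriv_comp_right _
    (avg_one_contDiff hφ hc hw') x (i := l) (by exact_mod_cast le_top)]
  refine (ContinuousMultilinearMap.norm_compContinuousLinearMap_le _ _).trans ?_
  have h1 : ‖iteratedFDeriv ℝ l (avg φ 1 (fun z => w (t • z)))
      (((t⁻¹ : ℝ) • ContinuousLinearMap.id ℝ E) x)‖ ≤ 1 * b * avgConst φ l := by
    rw [avg_one_eq]
    refine (norm_iteratedFDeriv_convolution_le _ hw' l _ _ hφ' hc' _ b hb0 ?_).trans ?_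
    · intro s hs
      have : tsupport (fun y => φ (-y)) = (Homeomorph.neg E) ⁻¹' tsupport φ :=
        tsupport_comp_eq_preimage φ (Homeomorph.neg E)
      rw [this] at hs
      have := hb (-s) hs
      simpa [smul_sub, smul_smul, ht.ne', sub_eq_add_neg] using this
    · unfold avgConst
      gcongr
      rw [ContinuousLinearMap.opNorm_flip]
      exact ContinuousLinearMap.opNorm_lsmul_le
  have h2 : ‖((t⁻¹ : ℝ) • ContinuousLinearMap.id ℝ E)‖ ≤ t⁻¹ := by
    rw [norm_smul, Real.norm_of_nonneg (by positivity)]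
    exact mul_le_of_le_one_right (by positivity) ContinuousLinearMap.norm_id_le
  calc _ ≤ (1 * b * avgConst φ l) * ∏ i : Fin l, t⁻¹ := by
        gcongr
        have := avgConst_nonneg φ l
        positivity
      _ = _ := by simp [Finset.prod_const]; ring

lemma integrable_avg {φ : E → ℝ} (hφ : Continuous φ) (hc : HasCompactSupport φ)
    (t : ℝ) {w : E → F} (hw : Continuous w) (x : E) :
    Integrable (fun y => φ y • w (x + t • y)) := by
  apply Continuous.integrable_of_hasCompactSupport
  · fun_prop
  · exact hc.smul_right

/-- Averages at different scales commute, by Fubini. -/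
lemma avg_comm {φ : E → ℝ} (hφ : Continuous φ) (hc : HasCompactSupport φ)
    (s t : ℝ) {w : E → F} (hw : Continuous w) (x : E) :
    avg φ s (avg φ t w) x = avg φ t (avg φ s w) x := by
  simp only [avg, ← integral_smul]
  rw [integral_integral_swap_of_hasCompactSupport]
  · congr 1; ext y; congr 1; ext z
    rw [smul_comm, add_right_comm]
  · simp only [Function.uncurry_def]; fun_prop
  · refine HasCompactSupport.of_support_subset_isCompact (hc.prod hc) ?_
    rintro ⟨y, z⟩ h
    simp only [Function.mem_support, Function.uncurry, ne_eq, smul_eq_zero, not_or] at h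
    exact ⟨subset_tsupport _ h.1, subset_tsupport _ h.2.1⟩

lemma avg_sub {φ : E → ℝ} (hφ : Continuous φ) (hc : HasCompactSupport φ)
    (t : ℝ) {w w' : E → F} (hw : Continuous w) (hw' : Continuous w') (x : E) :
    avg φ t (fun z => w z - w' z) x = avg φ t w x - avg φ t w' x := by
  simp only [avg, smul_sub]
  exact integral_sub (integrable_avg hφ hc t hw x) (integrable_avg hφ hc t hw' x)

lemma avg_const_smul {φ : E → ℝ} (t : ℝ) (c : ℝ) (w : E → F) (x : E) :
    avg φ t (fun z => c • w z) x = c • avg φ t w x := by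
  simp only [avg, ← integral_smul]
  congr 1; ext y; rw [smul_comm]

lemma avg_sum {φ : E → ℝ} (hφ : Continuous φ) (hc : HasCompactSupport φ)
    (t : ℝ) {ι : Type*} (s : Finset ι) {w : ι → E → F} (hw : ∀ i, Continuous (w i)) (x : E) :
    avg φ t (fun z => ∑ i ∈ s, w i z) x = ∑ i ∈ s, avg φ t (w i) x := by
  simp only [avg, Finset.smul_sum]
  exact integral_finsetSum _ fun i _ => integrable_avg hφ hc t (hw i) x

end Avg

/-! ### Approximation operators built from differences, and dyadic decomposition -/

section Approx

variable {E : Type} [NormedAddCommGroup E] [InnerProductSpace ℝ E] [FiniteDimensional ℝ E]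
  [MeasurableSpace E] [BorelSpace E] {F : Type} [NormedAddCommGroup F] [NormedSpace ℝ F]

/-- The weights for which `w x - ∑ i ∈ [1, m], diffCoef m i • w (x + i • y)` is, up to sign, the
`m`-th forward difference of `w` at `x` with step `y`. -/
def diffCoef (m i : ℕ) : ℝ := -((-1) ^ m * ((-1) ^ (m - i) * (m.choose i : ℝ)))

/-- The smoothing operator of order `m` at scale `h`: the difference `w - approx φ m h w` is an
average of `m`-th differences of `w` with steps `h • y`, `y ∈ supp φ`. It only looks at `w` in the
directions given by the support of `φ`. -/
def approx (φ : E → ℝ) (m : ℕ) (h : ℝ) (w : E → F) (x : E) : F :=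
  ∑ i ∈ Finset.range m, diffCoef m (i + 1) • avg φ ((i + 1) * h) w x

/-- The constant controlling the `l`-th derivative of `approx`. -/
def approxConst (φ : E → ℝ) (m l : ℕ) : ℝ :=
  ∑ i ∈ Finset.range m, |diffCoef m (i + 1)| * avgConst φ l

lemma approxConst_nonneg (φ : E → ℝ) (m l : ℕ) : 0 ≤ approxConst φ m l :=
  Finset.sum_nonneg fun _ _ => mul_nonneg (abs_nonneg _) (avgConst_nonneg _ _)

lemma approx_contDiff {φ : E → ℝ} (hφ : ContDiff ℝ ∞ φ) (hc : HasCompactSupport φ)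
    (m : ℕ) {h : ℝ} (hh : 0 < h) {w : E → F} (hw : Continuous w) :
    ContDiff ℝ ∞ (approx φ m h w) := by
  unfold approx
  refine ContDiff.sum fun i _ => ContDiff.const_smul _ (avg_contDiff hφ hc (by positivity) hw)

lemma norm_iteratedFDeriv_approx_le {φ : E → ℝ} (hφ : ContDiff ℝ ∞ φ) (hc : HasCompactSupport φ)
    (m : ℕ) {h : ℝ} (hh : 0 < h) {w : E → F}
    (hw : Continuous w) (l : ℕ) (x : E) {b : ℝ} (hb0 : 0 ≤ b)
    (hb : ∀ y ∈ tsupport φ, ∀ t : ℝ, h ≤ t → t ≤ m * h → ‖w (x + t • y)‖ ≤ b) :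
    ‖iteratedFDeriv ℝ l (approx φ m h w) x‖ ≤ approxConst φ m l * (h ^ l)⁻¹ * b := by
  have hcd : ∀ i : ℕ, ContDiff ℝ ∞ (avg φ ((i + 1) * h) w) := fun i =>
    avg_contDiff hφ hc (by positivity) hw
  unfold approx
  rw [iteratedFDeriv_fun_sum_apply (fun i _ =>
    ((hcd i).const_smul _).contDiffAt.of_le (by exact_mod_cast le_top))]
  rw [approxConst, Finset.sum_mul, Finset.sum_mul]
  refine norm_sum_le_of_le _ fun i hi => ?_
  have hi' : i + 1 ≤ m := by simpa using hi
  rw [iteratedFDeriv_const_smul_apply' ((hcd i).contDiffAt.of_le (by exact_mod_cast le_top)),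
    norm_smul, Real.norm_eq_abs, mul_assoc, mul_assoc]
  gcongr
  have h1 : h ≤ (i + 1) * h := by nlinarith [(Nat.cast_nonneg i : (0:ℝ) ≤ i)]
  have h2 : ((i : ℝ) + 1) * h ≤ m * h := by
    gcongr; exact_mod_cast hi'
  refine (norm_iteratedFDeriv_avg_le hφ hc (t := (i + 1) * h) (by positivity) hw l x hb0
    (fun y hy => hb y hy _ h1 h2)).trans ?_
  have := avgConst_nonneg φ l
  rw [mul_assoc]
  gcongr

lemma approx_comm {φ : E → ℝ} (hφ : ContDiff ℝ ∞ φ) (hc : HasCompactSupport φ)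
    (m : ℕ) {h h' : ℝ} (hh : 0 < h) (hh' : 0 < h') {w : E → F}
    (hw : Continuous w) (x : E) :
    approx φ m h (approx φ m h' w) x = approx φ m h' (approx φ m h w) x := by
  have hcd : ∀ (t : ℝ) (_ : 0 < t) (i : ℕ), Continuous (avg φ ((i + 1) * t) w) := fun t ht i =>
    (avg_contDiff hφ hc (by positivity) hw).continuous
  have key : ∀ (s t : ℝ) (_ : 0 < s) (_ : 0 < t), approx φ m s (approx φ m t w) x =
      ∑ i ∈ Finset.range m, ∑ j ∈ Finset.range m, (diffCoef m (i + 1) * diffCoef m (j + 1)) •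
        avg φ ((i + 1) * s) (avg φ ((j + 1) * t) w) x := by
    intro s t hs ht
    rw [approx]
    refine Finset.sum_congr rfl fun i _ => ?_
    have : approx φ m t w =
        fun z => ∑ j ∈ Finset.range m, diffCoef m (j + 1) • avg φ ((j + 1) * t) w z := rfl
    rw [this, avg_sum hφ.continuous hc _ _
      (w := fun (j : ℕ) z => diffCoef m (j + 1) • avg φ ((j + 1) * t) w z)
      (fun j => (hcd t ht j).const_smul (diffCoef m (j + 1))),
      Finset.smul_sum]
    refine Finset.sum_congr rfl fun j _ => ?_
    rw [avg_const_smul, smul_smul]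
  rw [key h h' hh hh', key h' h hh' hh, Finset.sum_comm]
  refine Finset.sum_congr rfl fun i _ => Finset.sum_congr rfl fun j _ => ?_
  rw [avg_comm hφ.continuous hc _ _ hw, mul_comm]

lemma approx_sub {φ : E → ℝ} (hφ : ContDiff ℝ ∞ φ) (hc : HasCompactSupport φ)
    (m : ℕ) (h : ℝ) {w w' : E → F} (hw : Continuous w) (hw' : Continuous w')
    (x : E) : approx φ m h (fun z => w z - w' z) x = approx φ m h w x - approx φ m h w' x := by
  simp only [approx, avg_sub hφ.continuous hc _ hw hw', smul_sub, Finset.sum_sub_distrib]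

/-- `w - approx φ m h w` is, up to sign, the average against `φ` of the `m`-th differences of `w`
with steps `h • y`. -/
lemma norm_sub_approx_le {φ : E → ℝ} (hφ : ContDiff ℝ ∞ φ) (hc : HasCompactSupport φ)
    (h0 : ∀ y, 0 ≤ φ y) (h1 : ∫ y, φ y = 1)
    [CompleteSpace F] (m : ℕ) (h : ℝ) {w : E → F} (hw : Continuous w) (x : E)
    {b : ℝ} (hb : ∀ y ∈ tsupport φ, ‖(fwdDiff (h • y))^[m] w x‖ ≤ b) :
    ‖w x - approx φ m h w x‖ ≤ b := by
  have hφi : Integrable φ := hφ.continuous.integrable_of_hasCompactSupport hc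
  have e : w x - approx φ m h w x
      = ∫ y, φ y • ((-1 : ℝ) ^ m • (fwdDiff (h • y))^[m] w x) := by
    have hI : ∀ i : ℕ, Integrable (fun y => φ y • w (x + ((i : ℝ) * h) • y)) := fun i =>
      integrable_avg hφ.continuous hc _ hw x
    have e1 : ∀ y, φ y • ((-1 : ℝ) ^ m • (fwdDiff (h • y))^[m] w x) =
        ∑ i ∈ Finset.range (m + 1), (-diffCoef m i) • (φ y • w (x + ((i : ℝ) * h) • y)) := by
      intro y
      rw [fwdDiff_iter_eq_sum_shift, Finset.smul_sum, Finset.smul_sum]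
      refine Finset.sum_congr rfl fun i _ => ?_
      have : (((-1) ^ (m - i) * (m.choose i : ℤ) : ℤ)) • w (x + i • h • y) =
          ((-1) ^ (m - i) * (m.choose i : ℝ)) • w (x + ((i : ℝ) * h) • y) := by
        rw [← Int.cast_smul_eq_zsmul ℝ]
        push_cast
        rw [← Nat.cast_smul_eq_nsmul ℝ i (h • y), smul_smul]
      rw [this, smul_smul, smul_smul, smul_smul, diffCoef, neg_neg]
      congr 1; ring
    have hI' : ∀ i : ℕ, Integrable (fun y => (-diffCoef m i) • (φ y • w (x + ((i : ℝ) * h) • y))) :=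
      fun i => (hI i).smul _
    simp_rw [e1]
    rw [integral_finsetSum _ (fun i _ => hI' i)]
    simp_rw [integral_smul]
    rw [Finset.sum_range_succ']
    have e2 : (∫ y, φ y • w (x + (((0 : ℕ) : ℝ) * h) • y)) = w x := by
      simp [integral_smul_const, h1]
    have e3 : -diffCoef m 0 = 1 := by
      simp only [diffCoef, neg_neg, Nat.sub_zero, Nat.choose_zero_right, Nat.cast_one, mul_one]
      rw [← mul_pow]; norm_num
    rw [e2, e3, one_smul, approx, add_comm, sub_eq_add_neg, ← Finset.sum_neg_distrib]
    congr 1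
    refine Finset.sum_congr rfl fun i _ => ?_
    rw [neg_smul, avg]
    push_cast
    rfl
  rw [e]
  calc _ ≤ ∫ y, φ y * b := by
        refine norm_integral_le_of_norm_le (hφi.mul_const b) (Filter.Eventually.of_forall ?_)
        intro y
        by_cases hy : y ∈ tsupport φ
        · have : ‖((-1 : ℝ) ^ m)‖ = 1 := by simp
          rw [norm_smul, norm_smul, this, one_mul, Real.norm_of_nonneg (h0 y)]
          exact mul_le_mul_of_nonneg_left (hb y hy) (h0 y)
        · simp [image_eq_zero_of_notMem_tsupport hy]
      _ = b := by rw [integral_mul_const, h1, one_mul]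

/-- The dyadic pieces of `w`: the increments of the sequence `T_h (T_h w)`, `h = H / 2 ^ j`,
where `T_h = approx φ m h`. Smoothing twice makes the increments small also slightly outside
the region where the differences of `w` are controlled. -/
def dyad (φ : E → ℝ) (m : ℕ) (H : ℝ) (w : E → F) : ℕ → E → F
  | 0 => approx φ m H (approx φ m H w)
  | j + 1 => fun x => approx φ m (H / 2 ^ (j + 1)) (approx φ m (H / 2 ^ (j + 1)) w) x -
      approx φ m (H / 2 ^ j) (approx φ m (H / 2 ^ j) w) x

lemma dyad_sum (φ : E → ℝ) (m : ℕ) (H : ℝ) (w : E → F) (n : ℕ) (x : E) :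
    ∑ j ∈ Finset.range (n + 1), dyad φ m H w j x =
      approx φ m (H / 2 ^ n) (approx φ m (H / 2 ^ n) w) x := by
  induction n with
  | zero => simp [dyad]
  | succ n ih => rw [Finset.sum_range_succ, ih]; simp [dyad]

lemma dyad_contDiff {φ : E → ℝ} (hφ : ContDiff ℝ ∞ φ) (hc : HasCompactSupport φ)
    (m : ℕ) {H : ℝ} (hH : 0 < H) {w : E → F} (hw : Continuous w) (j : ℕ) :
    ContDiff ℝ ∞ (dyad φ m H w j) := by
  have : ∀ h : ℝ, 0 < h → ContDiff ℝ ∞ (approx φ m h (approx φ m h w)) := fun h hh =>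
    approx_contDiff hφ hc m hh (approx_contDiff hφ hc m hh hw).continuous
  cases j with
  | zero => exact this H hH
  | succ j => exact (this _ (by positivity)).sub (this _ (by positivity))

/-- The hypotheses under which the dyadic pieces of `w` are controlled near `Ω₀`: the `m`-th
differences of `w` at points of `Ω₁`, with steps `h • y` where `y` is close to `v`, are at most
`X * h ^ a`; moving from `Ω₀` in the directions close to `v` leads to `Ω₁`; and `w` is bounded by
`S` at the points reached from `Ω₁`. -/
structure DyadHyp (Ω₀ Ω₁ : Set E) (v : E) (c H : ℝ) (m : ℕ) (a X S : ℝ) (w : E → F) : Prop where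
  cont : Continuous w
  sub : Ω₀ ⊆ Ω₁
  move : ∀ x ∈ Ω₀, ∀ y ∈ ball v c, ∀ t : ℝ, 0 < t → t ≤ m * H → x + t • y ∈ Ω₁
  diff : ∀ x ∈ Ω₁, ∀ y ∈ closedBall v (c / 2), ∀ h : ℝ, 0 < h → h ≤ H →
    ‖(fwdDiff (h • y))^[m] w x‖ ≤ X * h ^ a
  bdd : ∀ x ∈ Ω₁, ∀ y ∈ closedBall v (c / 2), ∀ t : ℝ, 0 < t → t ≤ m * H → ‖w (x + t • y)‖ ≤ S

lemma dyad_tendsto {φ : E → ℝ} (hφ : ContDiff ℝ ∞ φ) (hc : HasCompactSupport φ)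
    (h0 : ∀ y, 0 ≤ φ y) (h1 : ∫ y, φ y = 1)
    [CompleteSpace F] {Ω₀ Ω₁ : Set E} {v : E} {c H : ℝ} {m : ℕ} {a X S : ℝ}
    {w : E → F} (hd : DyadHyp Ω₀ Ω₁ v c H m a X S w) (hsupp : tsupport φ ⊆ closedBall v (c / 2))
    (hH : 0 < H) (hc0 : 0 < c) (hX : 0 ≤ X) (n : ℕ) (x : E) (hx : x ∈ Ω₀) :
    ‖w x - ∑ j ∈ Finset.range (n + 1), dyad φ m H w j x‖ ≤
      (1 + approxConst φ m 0) * X * (H / 2 ^ n) ^ a := by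
  rw [dyad_sum]
  set h := H / 2 ^ n with hh
  have hpos : 0 < h := by positivity
  have hle : h ≤ H := div_le_self hH.le (one_le_pow₀ (by norm_num))
  have hcont := (approx_contDiff hφ hc m hpos hd.cont).continuous
  have A : ∀ z ∈ Ω₁, ‖w z - approx φ m h w z‖ ≤ X * h ^ a := fun z hz =>
    norm_sub_approx_le hφ hc h0 h1 m h hd.cont z fun y hy => hd.diff z hz y (hsupp hy) h hpos hle
  have B : ‖approx φ m h (fun z => w z - approx φ m h w z) x‖ ≤
      approxConst φ m 0 * (h ^ 0)⁻¹ * (X * h ^ a) := by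
    rw [← norm_iteratedFDeriv_zero (𝕜 := ℝ) (f := approx φ m h _)]
    refine norm_iteratedFDeriv_approx_le hφ hc m hpos (hd.cont.sub hcont) 0 x (by positivity) ?_
    intro y hy t ht1 ht2
    refine A _ (hd.move x hx y ?_ t (hpos.trans_le ht1) (ht2.trans (by gcongr)))
    exact closedBall_subset_ball (by linarith) (hsupp hy)
  rw [approx_sub hφ hc m h hd.cont hcont] at B
  calc _ = ‖(w x - approx φ m h w x) +
        (approx φ m h w x - approx φ m h (approx φ m h w) x)‖ := by congr 1; abel
    _ ≤ X * h ^ a + approxConst φ m 0 * (h ^ 0)⁻¹ * (X * h ^ a) :=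
        (norm_add_le _ _).trans (add_le_add (A x (hd.sub hx)) B)
    _ = _ := by simp; ring

/-- The constant in `norm_iteratedFDeriv_dyad_le`. -/
def dyadConst (φ : E → ℝ) (m : ℕ) (H a : ℝ) (l : ℕ) : ℝ :=
  approxConst φ m l * (2 * (1 + 2 ^ a) + approxConst φ m 0 * (H ^ a)⁻¹)

lemma dyadConst_nonneg (φ : E → ℝ) (m : ℕ) {H : ℝ} (hH : 0 < H) (a : ℝ) (l : ℕ) :
    0 ≤ dyadConst φ m H a l := by
  have := approxConst_nonneg φ m l
  have := approxConst_nonneg φ m 0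
  unfold dyadConst; positivity

/-- The `j`-th dyadic piece has size `(X + S) h ^ a`, and derivatives of the corresponding size,
on the `c h / 2`-neighbourhood of `Ω₀`, where `h = H / 2 ^ j`. -/
lemma norm_iteratedFDeriv_dyad_le {φ : E → ℝ} (hφ : ContDiff ℝ ∞ φ) (hc : HasCompactSupport φ)
    (h0 : ∀ y, 0 ≤ φ y) (h1 : ∫ y, φ y = 1)
    [CompleteSpace F] {Ω₀ Ω₁ : Set E} {v : E} {c H : ℝ} {m : ℕ}
    {a X S : ℝ} {w : E → F} (hd : DyadHyp Ω₀ Ω₁ v c H m a X S w)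
    (hsupp : tsupport φ ⊆ closedBall v (c / 2)) (hH : 0 < H) (hX : 0 ≤ X)
    (hS : 0 ≤ S) (j l : ℕ) (x x' : E) (hx : x' ∈ Ω₀) (hxx : ‖x - x'‖ < c / 2 * (H / 2 ^ j)) :
    ‖iteratedFDeriv ℝ l (dyad φ m H w j) x‖ ≤
      dyadConst φ m H a l * (X + S) * (H / 2 ^ j) ^ a * ((H / 2 ^ j) ^ l)⁻¹ := by
  -- points reached from `x` at scales at least `H / 2 ^ j` are points reached from `x'`
  have reach : ∀ y ∈ tsupport φ, ∀ t : ℝ, H / 2 ^ j ≤ t → t ≤ m * H → x + t • y ∈ Ω₁ := by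
    intro y hy t ht1 ht2
    have hj : 0 < H / 2 ^ j := by positivity
    have htp : 0 < t := hj.trans_le ht1
    have e : x + t • y = x' + t • (y + t⁻¹ • (x - x')) := by
      rw [smul_add, smul_smul, mul_inv_cancel₀ htp.ne', one_smul]; abel
    rw [e]
    refine hd.move x' hx _ ?_ t htp ht2
    have hy' := hsupp hy
    rw [mem_closedBall_iff_norm] at hy'
    rw [mem_ball_iff_norm]
    have : ‖t⁻¹ • (x - x')‖ < c / 2 := by
      rw [norm_smul, norm_inv, Real.norm_of_nonneg htp.le, inv_mul_lt_iff₀ htp]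
      have hc2 : 0 < c / 2 := by
        by_contra hcon
        have : c / 2 * (H / 2 ^ j) ≤ 0 := mul_nonpos_of_nonpos_of_nonneg (not_lt.1 hcon) hj.le
        linarith [norm_nonneg (x - x')]
      calc _ < c / 2 * (H / 2 ^ j) := hxx
        _ ≤ t * (c / 2) := by rw [mul_comm]; gcongr
    calc ‖y + t⁻¹ • (x - x') - v‖ = ‖(y - v) + t⁻¹ • (x - x')‖ := by congr 1; abel
      _ ≤ ‖y - v‖ + ‖t⁻¹ • (x - x')‖ := norm_add_le _ _
      _ < c := by linarith
  have hC0 := approxConst_nonneg φ m 0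
  have hCl := approxConst_nonneg φ m l
  cases j with
  | zero =>
    simp only [pow_zero, div_one] at reach ⊢
    have hcont := (approx_contDiff hφ hc m hH hd.cont).continuous
    have A : ∀ z ∈ Ω₁, ‖approx φ m H w z‖ ≤ approxConst φ m 0 * (H ^ 0)⁻¹ * S := by
      intro z hz
      rw [← norm_iteratedFDeriv_zero (𝕜 := ℝ) (f := approx φ m H _)]
      exact norm_iteratedFDeriv_approx_le hφ hc m hH hd.cont 0 z hS
        fun y hy t ht1 ht2 => hd.bdd z hz y (hsupp hy) t (hH.trans_le ht1) ht2
    have B := norm_iteratedFDeriv_approx_le hφ hc m hH hcont l x (b := approxConst φ m 0 *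
      (H ^ 0)⁻¹ * S) (by positivity) (fun y hy t ht1 ht2 => A _ (reach y hy t ht1 ht2))
    refine B.trans ?_
    have e : approxConst φ m l * (H ^ l)⁻¹ * (approxConst φ m 0 * (H ^ 0)⁻¹ * S) =
        (approxConst φ m l * (approxConst φ m 0 * (H ^ a)⁻¹)) * S * H ^ a * (H ^ l)⁻¹ := by
      have : H ^ a ≠ 0 := (Real.rpow_pos_of_pos hH a).ne'
      field_simp
    rw [e, dyadConst]
    gcongr
    · have : (0:ℝ) ≤ 2 * (1 + 2 ^ a) := by positivity
      linarith
    · linarith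
  | succ j =>
    set h' := H / 2 ^ (j + 1) with hh'
    set h := H / 2 ^ j with hh
    have hp' : 0 < h' := by positivity
    have hp : 0 < h := by positivity
    have h2 : h = 2 * h' := by rw [hh, hh', pow_succ]; field_simp
    have hle : h ≤ H := div_le_self hH.le (one_le_pow₀ (by norm_num))
    have hle' : h' ≤ H := by linarith
    have hct := (approx_contDiff hφ hc m hp hd.cont).continuous
    have hct' := (approx_contDiff hφ hc m hp' hd.cont).continuous
    set w' : E → F := fun z => approx φ m h' w z - approx φ m h w z with hw'
    have hcw' : Continuous w' := hct'.sub hct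
    have e : dyad φ m H w (j + 1) = fun z => approx φ m h' w' z + approx φ m h w' z := by
      ext1 z
      rw [hw', approx_sub hφ hc m h' hct' hct, approx_sub hφ hc m h hct' hct,
        approx_comm hφ hc m hp hp' hd.cont]
      simp only [dyad]
      abel
    have A : ∀ z ∈ Ω₁, ‖w' z‖ ≤ X * (1 + 2 ^ a) * h' ^ a := by
      intro z hz
      have a1 := norm_sub_approx_le hφ hc h0 h1 m h' hd.cont z
        fun y hy => hd.diff z hz y (hsupp hy) h' hp' hle'
      have a2 := norm_sub_approx_le hφ hc h0 h1 m h hd.cont z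
        fun y hy => hd.diff z hz y (hsupp hy) h hp hle
      calc ‖w' z‖ = ‖(w z - approx φ m h w z) - (w z - approx φ m h' w z)‖ := by
            simp only [hw']; congr 1; abel
        _ ≤ X * h ^ a + X * h' ^ a := (norm_sub_le _ _).trans (add_le_add a2 a1)
        _ = _ := by rw [h2, Real.mul_rpow (by norm_num) hp'.le]; ring
    have hb0 : 0 ≤ X * (1 + 2 ^ a) * h' ^ a := by positivity
    have B1 := norm_iteratedFDeriv_approx_le hφ hc m hp' hcw' l x hb0
      (fun y hy t ht1 ht2 => A _ (reach y hy t ht1 (ht2.trans (by gcongr))))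
    have B2 := norm_iteratedFDeriv_approx_le hφ hc m hp hcw' l x hb0
      (fun y hy t ht1 ht2 => A _ (reach y hy t (by linarith) (ht2.trans (by gcongr))))
    have hl : (l : ℕ∞ω) ≤ (∞ : ℕ∞ω) := by exact_mod_cast le_top
    have e2 : iteratedFDeriv ℝ l (dyad φ m H w (j + 1)) x = iteratedFDeriv ℝ l (approx φ m h' w') x
        + iteratedFDeriv ℝ l (approx φ m h w') x := by
      rw [e]
      exact iteratedFDeriv_add_apply ((approx_contDiff hφ hc m hp' hcw').contDiffAt.of_le hl)
        ((approx_contDiff hφ hc m hp hcw').contDiffAt.of_le hl)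
    have hpow : (h ^ l)⁻¹ ≤ (h' ^ l)⁻¹ := by
      gcongr
      linarith
    rw [e2]
    calc _ ≤ approxConst φ m l * (h' ^ l)⁻¹ * (X * (1 + 2 ^ a) * h' ^ a) +
          approxConst φ m l * (h ^ l)⁻¹ * (X * (1 + 2 ^ a) * h' ^ a) :=
          (norm_add_le _ _).trans (add_le_add B1 B2)
      _ ≤ approxConst φ m l * (h' ^ l)⁻¹ * (X * (1 + 2 ^ a) * h' ^ a) +
          approxConst φ m l * (h' ^ l)⁻¹ * (X * (1 + 2 ^ a) * h' ^ a) := by gcongr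
      _ = (approxConst φ m l * (2 * (1 + 2 ^ a))) * X * h' ^ a * (h' ^ l)⁻¹ := by ring
      _ ≤ _ := by
        unfold dyadConst
        have : 0 ≤ approxConst φ m 0 * (H ^ a)⁻¹ := by positivity
        gcongr
        · linarith
        · linarith

end Approx

/-! ### Polynomial curves and polynomial maps -/

/-- The space of polynomial curves `ℝ → F` of degree at most `d`. -/
def polyCurve (d : ℕ) (F : Type) [NormedAddCommGroup F] [NormedSpace ℝ F] :
    Submodule ℝ (ℝ → F) :=
  Submodule.span ℝ {f | ∃ l ≤ d, ∃ v : F, f = fun t : ℝ => t ^ l • v}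

/-- The polynomial map of degree at most `n` whose homogeneous parts are the diagonals of the
multilinear maps `c i`, `i ≤ n`. -/
def polyMap {E F : Type} [NormedAddCommGroup E] [NormedSpace ℝ E] [NormedAddCommGroup F]
    [NormedSpace ℝ F] (n : ℕ) (c : ∀ i : ℕ, E [×i]→L[ℝ] F) (w : E) : F :=
  ∑ i ∈ Finset.range (n + 1), c i (fun _ => w)

section Poly

variable {E F : Type} [NormedAddCommGroup E] [NormedSpace ℝ E] [NormedAddCommGroup F]
  [NormedSpace ℝ F]

lemma polyCurve_monomial {d l : ℕ} (hl : l ≤ d) (v : F) :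
    (fun t : ℝ => t ^ l • v) ∈ polyCurve d F :=
  Submodule.subset_span ⟨l, hl, v, rfl⟩

lemma fwdDiff_polyCurve {d m : ℕ} (hdm : d < m) {f : ℝ → F} (hf : f ∈ polyCurve d F) :
    (fwdDiff (1 : ℝ))^[m] f = 0 := by
  induction hf using Submodule.span_induction with
  | mem f hf =>
    obtain ⟨l, hl, v, rfl⟩ := hf
    have h := fwdDiff_iter_pow_eq_zero_of_lt (R := ℝ) (j := l) (n := m) (hl.trans_lt hdm)
    ext x
    have hx := congrFun h x
    rw [fwdDiff_iter_eq_sum_shift] at hx ⊢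
    have : ∀ k ∈ Finset.range (m + 1), ((-1) ^ (m - k) * (m.choose k : ℤ) : ℤ) •
        ((x + k • (1 : ℝ)) ^ l • v) =
        (((-1) ^ (m - k) * (m.choose k : ℤ) : ℤ) • (x + k • (1 : ℝ)) ^ l) • v := by
      intro k _
      rw [smul_assoc]
    rw [Finset.sum_congr rfl this, ← Finset.sum_smul, hx]
    simp
  | zero => 
    ext x
    rw [fwdDiff_iter_eq_sum_shift]; simp
  | add f g _ _ hf hg => rw [fwdDiff_iter_add, hf, hg, add_zero]
  | smul r f _ hf => rw [fwdDiff_iter_const_smul, hf, smul_zero]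

/-- The Lagrange basis for the nodes `0, 1, …, d`. -/
def lagr (d i : ℕ) : Polynomial ℝ :=
  Lagrange.basis (Finset.range (d + 1)) (fun j : ℕ => (j : ℝ)) i

lemma polyCurve_eq_lagr {d : ℕ} {f : ℝ → F} (hf : f ∈ polyCurve d F) (t : ℝ) :
    f t = ∑ i ∈ Finset.range (d + 1), (lagr d i).eval t • f i := by
  induction hf using Submodule.span_induction with
  | mem f hf =>
    obtain ⟨l, hl, v, rfl⟩ := hf
    have h := Lagrange.eq_interpolate (s := Finset.range (d + 1)) (v := fun j : ℕ => (j : ℝ))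
      (f := (Polynomial.X ^ l : Polynomial ℝ)) (fun i _ j _ hij => by simpa using hij)
      (by rw [Polynomial.degree_X_pow, Finset.card_range]; exact_mod_cast Nat.lt_succ_of_le hl)
    have h2 := congrArg (Polynomial.eval t) h
    simp only [Lagrange.interpolate_apply, Polynomial.eval_finsetSum, Polynomial.eval_mul,
      Polynomial.eval_C, Polynomial.eval_pow, Polynomial.eval_X] at h2
    simp only [smul_smul, ← Finset.sum_smul]
    rw [h2]
    congr 1
    exact Finset.sum_congr rfl fun i _ => mul_comm _ _
  | zero => simp
  | add f g _ _ hf hg => simp only [Pi.add_apply, smul_add, Finset.sum_add_distrib, hf, hg]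
  | smul r f _ hf =>
    simp only [Pi.smul_apply, hf, Finset.smul_sum]
    exact Finset.sum_congr rfl fun i _ => smul_comm _ _ _

lemma polynomial_lip (P : Polynomial ℝ) (T : ℝ) :
    ∃ C : ℝ, 0 ≤ C ∧ ∀ t ∈ Icc 0 T, |P.eval t| ≤ C ∧ |P.eval t - P.eval 0| ≤ C * t := by
  obtain ⟨C₁, h₁⟩ := (isCompact_Icc (a := (0 : ℝ)) (b := T)).exists_bound_of_continuousOn
    P.continuous.continuousOn
  obtain ⟨C₂, h₂⟩ := (isCompact_Icc (a := (0 : ℝ)) (b := T)).exists_bound_of_continuousOn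
    P.derivative.continuous.continuousOn
  refine ⟨max 0 (max C₁ C₂), le_max_left _ _, fun t ht => ⟨?_, ?_⟩⟩
  · exact (h₁ t ht).trans ((le_max_left _ _).trans (le_max_right _ _))
  · have h := (convex_Icc (0 : ℝ) T).norm_image_sub_le_of_norm_deriv_le (𝕜 := ℝ)
      (f := fun s => P.eval s) (C := C₂) (x := 0) (y := t)
      (fun s _ => P.differentiable s) (fun s hs => by rw [Polynomial.deriv]; exact h₂ s hs)
      ⟨le_rfl, ht.1.trans ht.2⟩ ht
    rw [sub_zero, Real.norm_of_nonneg ht.1] at h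
    refine h.trans ?_
    have := ht.1
    gcongr
    exact (le_max_right _ _).trans (le_max_right _ _)

/-- A polynomial curve bounded at the nodes `0, …, d` is bounded and Lipschitz at `0`. -/
lemma polyCurve_bound (d : ℕ) (T : ℝ) : ∃ C : ℝ, 0 ≤ C ∧
    ∀ (F : Type) [NormedAddCommGroup F] [NormedSpace ℝ F] (f : ℝ → F) (X : ℝ),
      f ∈ polyCurve d F → (∀ i ≤ d, ‖f (i : ℕ)‖ ≤ X) →
      ∀ t ∈ Icc 0 T, ‖f t‖ ≤ C * X ∧ ‖f t - f 0‖ ≤ C * X * t := by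
  choose C hC0 hC using fun i => polynomial_lip (lagr d i) T
  refine ⟨∑ i ∈ Finset.range (d + 1), C i, Finset.sum_nonneg fun i _ => hC0 i, ?_⟩
  intro F _ _ f X hf hX t ht
  have hX' : ∀ i ∈ Finset.range (d + 1), ‖f (i : ℕ)‖ ≤ X := fun i hi =>
    hX i (by simpa [Nat.lt_succ_iff] using hi)
  constructor
  · rw [polyCurve_eq_lagr hf t, Finset.sum_mul]
    refine norm_sum_le_of_le _ fun i hi => ?_
    rw [norm_smul]
    exact mul_le_mul (hC i t ht).1 (hX' i hi) (norm_nonneg _) (hC0 i)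
  · rw [polyCurve_eq_lagr hf t, polyCurve_eq_lagr hf 0, ← Finset.sum_sub_distrib, Finset.sum_mul,
      Finset.sum_mul]
    refine norm_sum_le_of_le _ fun i hi => ?_
    rw [← sub_smul, norm_smul]
    calc _ ≤ (C i * t) * X := mul_le_mul (hC i t ht).2 (hX' i hi) (norm_nonneg _)
          (mul_nonneg (hC0 i) ht.1)
      _ = _ := by ring

lemma polyMap_comp_mem (n d : ℕ) (c : ∀ i : ℕ, E [×i]→L[ℝ] F) (v : ℕ → E) :
    (fun t : ℝ => polyMap n c (∑ l ∈ Finset.range (d + 1), t ^ l • v l)) ∈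
      polyCurve (n * d) F := by
  have : (fun t : ℝ => polyMap n c (∑ l ∈ Finset.range (d + 1), t ^ l • v l)) =
      ∑ i ∈ Finset.range (n + 1), ∑ r ∈ Fintype.piFinset (fun _ : Fin i => Finset.range (d + 1)),
        fun t : ℝ => t ^ (∑ j, r j) • c i (fun j => v (r j)) := by
    ext t
    simp only [polyMap, Finset.sum_apply]
    refine Finset.sum_congr rfl fun i _ => ?_
    have := (c i).toMultilinearMap.map_sum_finset (fun (_ : Fin i) (l : ℕ) => t ^ l • v l)
      (fun _ => Finset.range (d + 1))
    refine this.trans (Finset.sum_congr rfl fun r _ => ?_)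
    have h2 := (c i).toMultilinearMap.map_smul_univ (fun j => t ^ (r j)) (fun j => v (r j))
    rw [h2, Finset.prod_pow_eq_pow_sum]
    rfl
  rw [this]
  refine Submodule.sum_mem _ fun i hi => Submodule.sum_mem _ fun r hr => polyCurve_monomial ?_ _
  have hr' : ∀ j ∈ Finset.univ, r j ≤ d := fun j _ => by
    have := Fintype.mem_piFinset.1 hr j
    simpa [Nat.lt_succ_iff] using this
  have hi' : i ≤ n := by simpa [Nat.lt_succ_iff] using hi
  calc ∑ j, r j ≤ (Finset.univ : Finset (Fin i)).card • d := Finset.sum_le_card_nsmul _ _ _ hr'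
    _ = i * d := by simp
    _ ≤ n * d := Nat.mul_le_mul_right _ hi'

lemma polyMap_line_mem (n : ℕ) (c : ∀ i : ℕ, E [×i]→L[ℝ] F) (w e : E) :
    (fun t : ℝ => polyMap n c (w + t • e)) ∈ polyCurve n F := by
  have h := polyMap_comp_mem n 1 c (fun l => if l = 0 then w else e)
  simpa [Finset.sum_range_succ] using h

/-- Markov-type inequality: a polynomial map bounded by `X` on the ball of radius `ρ` is Lipschitz
with constant `C X / ρ` on the ball of radius `R ρ`. -/
lemma polyMap_lip (n : ℕ) (R : ℝ) (hR : 1 ≤ R) : ∃ C : ℝ, 0 ≤ C ∧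
    ∀ (E F : Type) [NormedAddCommGroup E] [NormedSpace ℝ E] [NormedAddCommGroup F]
      [NormedSpace ℝ F] (c : ∀ i : ℕ, E [×i]→L[ℝ] F) (b : F) (ρ X : ℝ), 0 < ρ →
      (∀ w, ‖w‖ < ρ → ‖polyMap n c w - b‖ ≤ X) → ∀ w w', ‖w‖ ≤ R * ρ → ‖w'‖ ≤ R * ρ →
      ‖polyMap n c w' - polyMap n c w‖ ≤ C * X / ρ * ‖w' - w‖ := by
  obtain ⟨C₁, hC₁, h₁⟩ := polyCurve_bound n ((R + 1) * (n + 1))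
  obtain ⟨C₂, hC₂, h₂⟩ := polyCurve_bound n (2 * R * (n + 1))
  refine ⟨C₂ * C₁ * (n + 1), by positivity, ?_⟩
  intro E F _ _ _ _ c b ρ X hρ hX w w' hw hw'
  have hcst : ∀ d : ℕ, (fun _ : ℝ => b) ∈ polyCurve d F := fun d => by
    simpa using polyCurve_monomial (Nat.zero_le d) b
  have hmem : ∀ w e, (fun t : ℝ => polyMap n c (w + t • e) - b) ∈ polyCurve n F := fun w e =>
    Submodule.sub_mem _ (polyMap_line_mem n c w e) (hcst n)
  have step : ∀ z, ‖z‖ ≤ (R + 1) * ρ → ‖polyMap n c z - b‖ ≤ C₁ * X := by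
    intro z hz
    have hT : 0 < (R + 1) * ((n : ℝ) + 1) := by positivity
    have := (h₁ F _ X (hmem 0 (((R + 1) * ((n : ℝ) + 1))⁻¹ • z)) ?_ _ ⟨hT.le, le_rfl⟩).1
    · simpa only [smul_smul, mul_inv_cancel₀ hT.ne', one_smul, zero_add] using this
    · intro i hi
      simp only [zero_add]
      apply hX
      rw [norm_smul, norm_smul, norm_inv, Real.norm_of_nonneg hT.le, Real.norm_natCast]
      have hi' : (i : ℝ) ≤ n := by exact_mod_cast hi
      calc (i : ℝ) * (((R + 1) * ((n : ℝ) + 1))⁻¹ * ‖z‖)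
          ≤ n * (((R + 1) * ((n : ℝ) + 1))⁻¹ * ((R + 1) * ρ)) := by gcongr
        _ = n / (n + 1) * ρ := by field_simp
        _ < 1 * ρ := by
          gcongr
          rw [div_lt_one (by positivity)]; linarith
        _ = ρ := one_mul _
  rcases eq_or_ne w' w with rfl | hne
  · simp
  have hpos : 0 < ‖w' - w‖ := norm_pos_iff.2 (sub_ne_zero.2 hne)
  set τ : ℝ := ‖w' - w‖ * (n + 1) / ρ with hτ
  have hτ0 : 0 < τ := by positivity
  have hle : ‖w' - w‖ ≤ 2 * R * ρ := by
    calc _ ≤ ‖w'‖ + ‖w‖ := norm_sub_le _ _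
      _ ≤ _ := by linarith
  have := (h₂ F _ (C₁ * X) (hmem w (τ⁻¹ • (w' - w))) ?_ τ ⟨hτ0.le, ?_⟩).2
  · simp only [smul_smul, mul_inv_cancel₀ hτ0.ne', one_smul, zero_mul, zero_smul, add_zero,
      add_sub_cancel, sub_sub_sub_cancel_right] at this
    refine this.trans (le_of_eq ?_)
    rw [hτ]; ring
  · intro i hi
    apply step
    have hi' : (i : ℝ) ≤ n := by exact_mod_cast hi
    calc ‖w + (i : ℝ) • τ⁻¹ • (w' - w)‖ ≤ ‖w‖ + i * (τ⁻¹ * ‖w' - w‖) := by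
          refine (norm_add_le _ _).trans ?_
          rw [norm_smul, norm_smul, norm_inv, Real.norm_of_nonneg hτ0.le, Real.norm_natCast]
      _ ≤ R * ρ + n * (τ⁻¹ * ‖w' - w‖) := by gcongr
      _ = R * ρ + n / (n + 1) * ρ := by
          rw [hτ]; field_simp
      _ ≤ R * ρ + 1 * ρ := by
          gcongr
          rw [div_le_one (by positivity)]; linarith
      _ = _ := by ring
  · rw [hτ, div_le_iff₀ hρ]
    calc _ ≤ (2 * R * ρ) * (n + 1) := by gcongr
      _ = _ := by ring

end Poly

/-! ### Differences and local polynomial approximation of Zygmund functions -/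

section GlobalDiff

variable {E F : Type} [NormedAddCommGroup E] [NormedSpace ℝ E] [NormedAddCommGroup F]
  [NormedSpace ℝ F]

lemma contDiff_fwdDiff {n : ℕ∞ω} {f : E → F} (hf : ContDiff ℝ n f) (y : E) :
    ContDiff ℝ n (fwdDiff y f) := by
  unfold fwdDiff
  fun_prop

lemma iteratedFDeriv_fwdDiff {l : ℕ} {f : E → F} (hf : ContDiff ℝ l f) (y : E) :
    iteratedFDeriv ℝ l (fwdDiff y f) = fwdDiff y (iteratedFDeriv ℝ l f) := by
  ext1 x
  have h1 : ContDiff ℝ l (fun z => f (z + y)) := by fun_prop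
  have : fwdDiff y f = (fun z => f (z + y)) - f := rfl
  rw [this, iteratedFDeriv_sub_apply h1.contDiffAt hf.contDiffAt, iteratedFDeriv_comp_add_right]
  rfl

lemma norm_fwdDiff_iteratedFDeriv_le {k : ℕ} {f : E → F} (hf : ContDiff ℝ (k + 1 : ℕ) f) {M : ℝ}
    (hM : ∀ x, ‖iteratedFDeriv ℝ (k + 1) f x‖ ≤ M) (y z : E) :
    ‖fwdDiff y (iteratedFDeriv ℝ k f) z‖ ≤ M * ‖y‖ := by
  have h := (convex_univ (𝕜 := ℝ) (E := E)).norm_image_sub_le_of_norm_fderiv_le (𝕜 := ℝ)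
    (f := iteratedFDeriv ℝ k f) (C := M) (x := z) (y := z + y)
    (fun x _ => hf.differentiable_iteratedFDeriv (by exact_mod_cast Nat.lt_succ_self k) x)
    (fun x _ => by rw [norm_fderiv_iteratedFDeriv]; exact hM x) (mem_univ _) (mem_univ _)
  simpa [fwdDiff] using h

lemma norm_fwdDiff_iter_le_deriv (k : ℕ) : ∀ {f : E → F} (_ : ContDiff ℝ k f) {M : ℝ}
    (_ : ∀ x, ‖iteratedFDeriv ℝ k f x‖ ≤ M) (y x : E),
    ‖(fwdDiff y)^[k] f x‖ ≤ M * ‖y‖ ^ k := by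
  induction k with
  | zero =>
    intro f hf M hM y x
    simpa using hM x
  | succ k ih =>
    intro f hf M hM y x
    have hk : ContDiff ℝ k f := hf.of_le (by exact_mod_cast Nat.le_succ k)
    rw [Function.iterate_succ_apply]
    refine (ih (contDiff_fwdDiff hk y) (M := M * ‖y‖) ?_ y x).trans (le_of_eq (by ring))
    intro z
    rw [iteratedFDeriv_fwdDiff hk]
    exact norm_fwdDiff_iteratedFDeriv_le hf hM y z

lemma le_of_coe_nnnorm_le {G : Type*} [NormedAddCommGroup G] {x : G} {A : ℝ} (hA : 0 ≤ A)
    (h : (‖x‖₊ : ℝ≥0∞) ≤ ENNReal.ofReal A) : ‖x‖ ≤ A := by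
  rwa [← ENNReal.ofReal_coe_nnreal, ENNReal.ofReal_le_ofReal_iff hA] at h

/-- A bound on the Hölder–Zygmund norm of order `a` bounds the function and its differences of
order `⌈a⌉ + 1`. -/
lemma norm_fwdDiff_le_of_hzNorm {a : ℝ} {k : ℕ} (hk : k = ⌈a⌉₊ - 1) (ha : (k : ℝ) < a)
    {W : E → F} (hW : ContDiff ℝ k W) {A : ℝ} (hA0 : 0 ≤ A)
    (hA : hzNorm a W ≤ ENNReal.ofReal A) :
    (∀ x, ‖W x‖ ≤ A) ∧ ∀ x y, ‖(fwdDiff y)^[k + 2] W x‖ ≤ A * ‖y‖ ^ a := by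
  rw [hzNorm, ← hk] at hA
  constructor
  · intro x
    refine le_of_coe_nnnorm_le hA0 (le_trans ?_ hA)
    refine le_trans ?_ le_self_add
    refine le_trans ?_ (Finset.single_le_sum (f := fun k => ⨆ x, (‖iteratedFDeriv ℝ k W x‖₊ : ℝ≥0∞))
      (fun _ _ => zero_le) (Finset.mem_range.2 (Nat.succ_pos k)))
    refine le_trans (le_of_eq ?_) (le_iSup _ x)
    norm_cast
    ext; simp
  · intro x y
    have hs : 0 < a - k := by linarith
    rcases eq_or_ne y 0 with rfl | hy
    · have h0 : (fwdDiff (0 : E))^[k + 2] W = 0 := by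
        rw [Function.iterate_succ_apply]
        have : fwdDiff (0 : E) W = 0 := by ext; simp [fwdDiff]
        rw [this]
        ext x
        rw [fwdDiff_iter_eq_sum_shift]; simp
      simp only [h0, Pi.zero_apply, norm_zero]
      positivity
    have hyp : 0 < ‖y‖ := norm_pos_iff.2 hy
    rw [Function.iterate_add_apply]
    have hW1 := contDiff_fwdDiff hW y
    have hW2 := contDiff_fwdDiff hW1 y
    have := norm_fwdDiff_iter_le_deriv k (f := (fwdDiff y)^[2] W) hW2 (M := A * ‖y‖ ^ (a - k)) ?_ y x
    · refine this.trans (le_of_eq ?_)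
      rw [mul_assoc, ← Real.rpow_natCast, ← Real.rpow_add hyp]
      congr 2; ring
    · intro z
      have e : (fwdDiff y)^[2] W = fwdDiff y (fwdDiff y W) := rfl
      rw [e, iteratedFDeriv_fwdDiff hW1, iteratedFDeriv_fwdDiff hW]
      set f := iteratedFDeriv ℝ k W with hf
      have h1 : (‖f (z + 2 • y) + f z - 2 • f (z + y)‖₊ : ℝ≥0∞) / (‖y‖₊ : ℝ≥0∞) ^ (a - k) ≤
          ENNReal.ofReal A := by
        refine le_trans ?_ (le_trans le_add_self hA)
        unfold zygSemi
        exact le_iSup_of_le y (le_iSup_of_le hy (le_iSup_of_le z le_rfl))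
      have e2 : fwdDiff y (fwdDiff y f) z = f (z + 2 • y) + f z - 2 • f (z + y) := by
        simp only [fwdDiff, two_smul, add_assoc]; abel
      rw [e2]
      refine le_of_coe_nnnorm_le (by positivity) ?_
      rw [ENNReal.div_le_iff_le_mul] at h1
      · refine h1.trans (le_of_eq ?_)
        rw [ENNReal.ofReal_mul hA0, ← ENNReal.ofReal_coe_nnreal,
          ENNReal.ofReal_rpow_of_nonneg (by positivity) hs.le]
        rfl
      · left
        exact (ENNReal.rpow_pos (by simpa using hyp) (by simp)).ne'
      · left
        exact (ENNReal.rpow_lt_top_of_nonneg hs.le (by simp)).ne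

end GlobalDiff

section PolyApprox

variable {E : Type} [NormedAddCommGroup E] [InnerProductSpace ℝ E] [FiniteDimensional ℝ E]
  [MeasurableSpace E] [BorelSpace E]

lemma exists_bump (v : E) {c : ℝ} (hc : 0 < c) : ∃ φ : E → ℝ, ContDiff ℝ ∞ φ ∧
    HasCompactSupport φ ∧ (∀ y, 0 ≤ φ y) ∧ ∫ y, φ y = 1 ∧ tsupport φ ⊆ closedBall v c := by
  let b : ContDiffBump v := ⟨c / 2, c, by positivity, by linarith⟩
  exact ⟨b.normed volume, b.contDiff_normed, b.hasCompactSupport_normed, b.nonneg_normed,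
    b.integral_normed, b.tsupport_normed_eq.subset⟩

lemma dyadic_rpow (j l : ℕ) (a : ℝ) :
    ((1 : ℝ) / 2 ^ j) ^ a * ((1 / 2 ^ j) ^ l)⁻¹ = ((2 : ℝ) ^ ((l : ℝ) - a)) ^ j := by
  have h2 : (0 : ℝ) < 2 ^ j := by positivity
  have h1 : ((2 : ℝ) ^ ((l : ℝ) - a)) ^ j = (2 ^ j) ^ ((l : ℝ) - a) := by
    rw [← Real.rpow_natCast, ← Real.rpow_natCast, ← Real.rpow_mul (by norm_num),
      ← Real.rpow_mul (by norm_num), mul_comm]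
  rw [h1, Real.rpow_sub h2, Real.rpow_natCast, one_div, Real.inv_rpow h2.le, inv_pow, inv_inv]
  field_simp

lemma geom_sum_le {r : ℝ} (hr : 1 < r) (n : ℕ) :
    ∑ j ∈ Finset.range (n + 1), r ^ j ≤ r / (r - 1) * r ^ n := by
  have h1 : 0 < r - 1 := by linarith
  rw [geom_sum_eq hr.ne', div_mul_eq_mul_div, ← pow_succ']
  gcongr
  linarith

/-- Functions with controlled differences of order `k + 2` are approximated on each ball of radius
`ρ` by polynomials of degree `k + 1` up to `ρ ^ a`: take the Taylor polynomial of a smoothing of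
the function at scale about `ρ`. -/
lemma exists_polyMap_approx (E F : Type) [NormedAddCommGroup E] [InnerProductSpace ℝ E]
    [FiniteDimensional ℝ E] [MeasurableSpace E] [BorelSpace E] [NormedAddCommGroup F]
    [NormedSpace ℝ F] [CompleteSpace F] {a : ℝ} {k : ℕ} (hka : (k : ℝ) < a) (hak : a ≤ k + 1) :
    ∃ C : ℝ, 0 < C ∧ ∀ (W : E → F) (A : ℝ), Continuous W → (∀ x, ‖W x‖ ≤ A) →
      (∀ x y, ‖(fwdDiff y)^[k + 2] W x‖ ≤ A * ‖y‖ ^ a) → ∀ (z : E) (ρ : ℝ), 0 < ρ →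
      ∃ c : ∀ i : ℕ, E [×i]→L[ℝ] F, ∀ x, ‖x - z‖ ≤ ρ →
        ‖W x - polyMap (k + 1) c (x - z)‖ ≤ C * A * ρ ^ a := by
  have ha : 0 < a := lt_of_le_of_lt (Nat.cast_nonneg k) hka
  obtain ⟨φ, hφ, hc, h0, h1, hsupp⟩ := exists_bump (0 : E) (c := 1 / 2) (by norm_num)
  set m := k + 2 with hm
  set r : ℝ := 2 ^ ((m : ℝ) - a) with hr
  have hr1 : 1 < r := by
    rw [hr]; apply Real.one_lt_rpow (by norm_num)
    rw [hm]; push_cast; linarith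
  have hr1' : 0 < r - 1 := by linarith
  set C₁ := (1 + approxConst φ m 0) * 2 ^ a with hC₁
  set C₂ := dyadConst φ m 1 a m * 2 * (r / (r - 1)) with hC₂
  have hC₁0 : 0 ≤ C₁ := by
    have := approxConst_nonneg φ m 0
    positivity
  have hC₂0 : 0 ≤ C₂ := by
    have := dyadConst_nonneg φ m one_pos a m
    positivity
  refine ⟨1 + C₁ + C₂, by positivity, ?_⟩
  intro W A hW hbd hdiff z ρ hρ
  have hA : 0 ≤ A := (norm_nonneg _).trans (hbd 0)
  rcases le_or_gt 1 ρ with hρ1 | hρ1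
  · refine ⟨fun _ => 0, fun x _ => ?_⟩
    have h1 : (1 : ℝ) ≤ ρ ^ a := Real.one_le_rpow hρ1 ha.le
    simp only [polyMap, zero_apply, Finset.sum_const_zero, sub_zero]
    calc ‖W x‖ ≤ 1 * A * 1 := by simpa using hbd x
      _ ≤ _ := by gcongr; linarith
  have hd : DyadHyp (univ : Set E) univ (0 : E) 1 1 m a A A W :=
    { cont := hW
      sub := subset_rfl
      move := fun _ _ _ _ _ _ _ => mem_univ _
      diff := by
        intro x _ y hy h hh _
        refine (hdiff x (h • y)).trans ?_
        have hy' : ‖y‖ ≤ 1 := by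
          have := mem_closedBall_zero_iff.1 hy; linarith
        have : ‖h • y‖ ≤ h := by
          rw [norm_smul, Real.norm_of_nonneg hh.le]
          exact mul_le_of_le_one_right hh.le hy'
        gcongr
      bdd := fun x _ y _ t _ _ => hbd _ }
  obtain ⟨n, hn1, hn2⟩ := exists_nat_pow_near_of_lt_one hρ hρ1.le
    (by norm_num : (0 : ℝ) < 1 / 2) (by norm_num)
  set V : E → F := fun x => ∑ j ∈ Finset.range (n + 1), dyad φ m 1 W j x with hV
  have hVc : ContDiff ℝ ∞ V := ContDiff.sum fun j _ => dyad_contDiff hφ hc m one_pos hW j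
  have hpow : (1 : ℝ) / 2 ^ n = (1 / 2) ^ n := by rw [one_div_pow]
  have e1 : ∀ x, ‖W x - V x‖ ≤ C₁ * A * ρ ^ a := by
    intro x
    refine (dyad_tendsto hφ hc h0 h1 hd hsupp one_pos one_pos hA n x (mem_univ _)).trans ?_
    have : (1 / 2 ^ n : ℝ) ≤ 2 * ρ := by
      rw [hpow]; rw [pow_succ] at hn1; linarith
    calc _ ≤ (1 + approxConst φ m 0) * A * (2 * ρ) ^ a := by
          have := approxConst_nonneg φ m 0
          gcongr
      _ = _ := by rw [Real.mul_rpow (by norm_num) hρ.le, hC₁]; ring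
  have e2 : ∀ x, ‖iteratedFDeriv ℝ m V x‖ ≤ C₂ * A * ρ ^ (a - m) := by
    intro x
    rw [hV, iteratedFDeriv_fun_sum_apply (fun j _ =>
      ((dyad_contDiff hφ hc m one_pos hW j).contDiffAt.of_le (by exact_mod_cast le_top)))]
    have hb : ∀ j ∈ Finset.range (n + 1), ‖iteratedFDeriv ℝ m (dyad φ m 1 W j) x‖ ≤
        dyadConst φ m 1 a m * (A + A) * r ^ j := by
      intro j _
      refine (norm_iteratedFDeriv_dyad_le hφ hc h0 h1 hd hsupp one_pos hA hA j m x x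
        (mem_univ _) (by simp)).trans (le_of_eq ?_)
      rw [mul_assoc]
      congr 1
      exact dyadic_rpow j m a
    refine (norm_sum_le_of_le _ hb).trans ?_
    rw [← Finset.mul_sum]
    have hrn : r ^ n ≤ ρ ^ (a - m) := by
      have h3 : (2 : ℝ) ^ n ≤ ρ⁻¹ := by
        rw [le_inv_comm₀ (by positivity) hρ, ← one_div, hpow]; exact hn2
      calc r ^ n = ((2 : ℝ) ^ n) ^ ((m : ℝ) - a) := by
            rw [hr, ← Real.rpow_natCast, ← Real.rpow_natCast, ← Real.rpow_mul (by norm_num),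
              ← Real.rpow_mul (by norm_num), mul_comm]
        _ ≤ (ρ⁻¹) ^ ((m : ℝ) - a) := by
            apply Real.rpow_le_rpow (by positivity) h3
            rw [hm]; push_cast; linarith
        _ = _ := by rw [Real.inv_rpow hρ.le, ← Real.rpow_neg hρ.le]; congr 1; ring
    have := dyadConst_nonneg φ m one_pos a m
    calc _ ≤ dyadConst φ m 1 a m * (A + A) * (r / (r - 1) * r ^ n) := by
          gcongr; exact geom_sum_le hr1 n
      _ ≤ dyadConst φ m 1 a m * (A + A) * (r / (r - 1) * ρ ^ (a - m)) := by gcongr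
      _ = _ := by rw [hC₂]; ring
  -- the approximating polynomial is the Taylor polynomial of the truncated sum `V` at `z`
  refine ⟨fun i => (i.factorial : ℝ)⁻¹ • iteratedFDeriv ℝ i V z, fun x hx => ?_⟩
  have hT := map_add_eq_sum_add_integral_iteratedFDeriv (f := V) (x := z) (y := x - z) (n := k + 1)
    (fun t _ => hVc.contDiffAt.of_le (by exact_mod_cast le_top))
  rw [add_sub_cancel] at hT
  have e3 : ‖V x - polyMap (k + 1) (fun i => (i.factorial : ℝ)⁻¹ • iteratedFDeriv ℝ i V z) (x - z)‖ ≤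
      C₂ * A * ρ ^ a := by
    rw [hT]
    simp only [polyMap, smul_apply, add_sub_cancel_left]
    rw [norm_smul]
    have hf : ‖((k + 1).factorial : ℝ)⁻¹‖ ≤ 1 := by
      rw [norm_inv, Real.norm_natCast]
      apply inv_le_one_of_one_le₀
      exact_mod_cast Nat.factorial_pos _
    have hi := intervalIntegral.norm_integral_le_of_norm_le_const (a := 0) (b := 1)
      (C := C₂ * A * ρ ^ a)
      (f := fun t : ℝ => (1 - t) ^ (k + 1) • (iteratedFDeriv ℝ (k + 1 + 1) V (z + t • (x - z)))
        fun _ => x - z) ?_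
    · rw [sub_zero, abs_one, mul_one] at hi
      exact (mul_le_mul hf hi (norm_nonneg _) zero_le_one).trans (by rw [one_mul])
    · intro t ht
      rw [uIoc_of_le zero_le_one] at ht
      rw [norm_smul]
      have ht1 : ‖(1 - t) ^ (k + 1)‖ ≤ 1 := by
        rw [norm_pow]
        apply pow_le_one₀ (norm_nonneg _)
        rw [Real.norm_of_nonneg (by linarith [ht.2])]; linarith [ht.1]
      have h4 : ‖(iteratedFDeriv ℝ (k + 1 + 1) V (z + t • (x - z))) fun _ => x - z‖ ≤
          C₂ * A * ρ ^ (a - m) * ρ ^ m := by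
        refine (ContinuousMultilinearMap.le_opNorm _ _).trans ?_
        rw [Finset.prod_const, Finset.card_univ, Fintype.card_fin]
        exact mul_le_mul (e2 _) (by gcongr) (by positivity) (by positivity)
      refine (mul_le_mul ht1 h4 (norm_nonneg _) zero_le_one).trans (le_of_eq ?_)
      rw [one_mul, mul_assoc, ← Real.rpow_natCast, ← Real.rpow_add hρ]
      congr 2; ring
  calc _ = ‖(W x - V x) + (V x - polyMap (k + 1)
        (fun i => (i.factorial : ℝ)⁻¹ • iteratedFDeriv ℝ i V z) (x - z))‖ := by congr 1; abel
    _ ≤ C₁ * A * ρ ^ a + C₂ * A * ρ ^ a := (norm_add_le _ _).trans (add_le_add (e1 x) e3)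
    _ ≤ _ := by
      have : 0 ≤ A * ρ ^ a := by positivity
      nlinarith

end PolyApprox

/-! ### Differences of a composition -/

/-- The difference of order `m` of a function is controlled by its distance, along the step, to a
polynomial curve of degree less than `m`. -/
lemma norm_fwdDiff_le_of_polyCurve {E F : Type} [NormedAddCommGroup E]
    [NormedAddCommGroup F] [NormedSpace ℝ F] {d m : ℕ} (hdm : d < m) {f : E → F} {x y : E}
    {P : ℝ → F} (hP : P ∈ polyCurve d F) {e : ℝ}
    (he : ∀ i : ℕ, i ≤ m → ‖f (x + i • y) - P i‖ ≤ e) :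
    ‖(fwdDiff y)^[m] f x‖ ≤ 2 ^ m * e := by
  have h0 := congrFun (fwdDiff_polyCurve hdm hP) 0
  rw [fwdDiff_iter_eq_sum_shift] at h0
  have h1 : (fwdDiff y)^[m] f x =
      ∑ i ∈ Finset.range (m + 1), ((-1) ^ (m - i) * (m.choose i : ℤ) : ℤ) •
        (f (x + i • y) - P i) := by
    simp only [smul_sub, Finset.sum_sub_distrib]
    rw [fwdDiff_iter_eq_sum_shift]
    have : ∑ i ∈ Finset.range (m + 1), ((-1) ^ (m - i) * (m.choose i : ℤ) : ℤ) • P i = 0 := by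
      simpa using h0
    rw [this, sub_zero]
  rw [h1]
  have h2 : ((2 : ℝ) ^ m) = ∑ i ∈ Finset.range (m + 1), (m.choose i : ℝ) := by
    exact_mod_cast (Nat.sum_range_choose m).symm
  rw [h2, Finset.sum_mul]
  refine norm_sum_le_of_le _ fun i hi => ?_
  have him : i ≤ m := by simpa [Nat.lt_succ_iff] using hi
  rw [← Int.cast_smul_eq_zsmul ℝ, norm_smul]
  have : ‖(((-1) ^ (m - i) * (m.choose i : ℤ) : ℤ) : ℝ)‖ = m.choose i := by
    push_cast
    rw [norm_mul, norm_pow, norm_neg, norm_one, one_pow, one_mul, Real.norm_natCast]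
  rw [this]
  gcongr
  exact he i him

/-- The order of the differences used to control compositions of functions of class `Λ^a`,
`k = ⌈a⌉ - 1`: it exceeds the degree of the composition of two polynomials of degree `k + 1`. -/
def compOrder (k : ℕ) : ℕ := (k + 1) * (k + 1) + 1

/-- Differences of a composition `U ∘ G` along segments of `D`. On the segment, `G` is close to a
polynomial curve `p`, and `U` is close to a polynomial `q` on the relevant ball, so that the
difference of `U ∘ G` is that of `U ∘ G - q ∘ p`. The bound `B` for `∇U` on `Dt` passes to a bound
for the Lipschitz constant of `q`, since `Dt` contains a ball of comparable radius. -/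
lemma norm_fwdDiff_comp_le (E E' F : Type) [NormedAddCommGroup E] [InnerProductSpace ℝ E]
    [FiniteDimensional ℝ E] [MeasurableSpace E] [BorelSpace E]
    [NormedAddCommGroup E'] [InnerProductSpace ℝ E']
    [FiniteDimensional ℝ E'] [MeasurableSpace E'] [BorelSpace E'] [NormedAddCommGroup F]
    [NormedSpace ℝ F] [CompleteSpace F] {a : ℝ} {k : ℕ} (hka : (k : ℝ) < a) (hak : a ≤ k + 1)
    (M c r₀ : ℝ) (hM : 0 ≤ M) (hc : 0 < c) (Dt : Set E')
    (hcone : ∀ z ∈ Dt, ∃ v : E', ‖v‖ ≤ M ∧ ∀ t : ℝ, 0 < t → t ≤ r₀ →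
      ball (z + t • v) (c * t) ⊆ Dt) :
    ∃ C : ℝ, 0 < C ∧ ∀ (D : Set E) (U : E' → F) (G : E → E') (A A' B L : ℝ),
      Continuous U → (∀ x, ‖U x‖ ≤ A) → (∀ x y, ‖(fwdDiff y)^[k + 2] U x‖ ≤ A * ‖y‖ ^ a) →
      Continuous G → (∀ x, ‖G x‖ ≤ A') → (∀ x y, ‖(fwdDiff y)^[k + 2] G x‖ ≤ A' * ‖y‖ ^ a) →
      MapsTo G D Dt → 0 ≤ B → 0 ≤ L →
      (∀ z ∈ Dt, DifferentiableAt ℝ U z ∧ ‖fderiv ℝ U z‖ ≤ B) →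
      (∀ x ∈ D, DifferentiableAt ℝ G x ∧ ‖fderiv ℝ G x‖ ≤ L) →
      ∀ x y : E, (∀ t : ℝ, 0 ≤ t → t ≤ compOrder k → x + t • y ∈ D) → L * ‖y‖ ≤ r₀ →
      ‖(fwdDiff y)^[compOrder k] (U ∘ G) x‖ ≤ C * (A * L ^ a + B * A') * ‖y‖ ^ a := by
  have ha : 0 < a := lt_of_le_of_lt (Nat.cast_nonneg k) hka
  obtain ⟨CG, hCG, hG⟩ := exists_polyMap_approx E E' hka hak
  obtain ⟨CU, hCU, hU⟩ := exists_polyMap_approx E' F hka hak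
  set m := compOrder k with hm
  have hm1 : (1 : ℝ) ≤ m := by rw [hm, compOrder]; push_cast; nlinarith [(Nat.cast_nonneg k : (0:ℝ) ≤ k)]
  set e₀ : ℝ := CG * (m : ℝ) ^ a with he₀
  have he₀0 : 0 ≤ e₀ := by positivity
  set R : ℝ := M + m + e₀ + c with hR
  have hR0 : 0 < R := by positivity
  obtain ⟨CL, hCL, hL⟩ := polyMap_lip (k + 1) (R / c) (by
    rw [le_div_iff₀ hc, one_mul, hR]
    linarith)
  refine ⟨2 ^ m * (m + CU * R ^ a + CL * e₀ + CL * (CU * R ^ a) * e₀ / c), by positivity, ?_⟩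
  intro D U G A A' B L hUc hUA hUd hGc hGA hGd hmap hB hL0 hUf hGf x y hseg hyr
  have hA : 0 ≤ A := (norm_nonneg _).trans (hUA 0)
  have hA' : 0 ≤ A' := (norm_nonneg _).trans (hGA 0)
  set S : Set E := (fun t : ℝ => x + t • y) '' Icc 0 (m : ℝ) with hS
  have hSD : S ⊆ D := by
    rintro _ ⟨t, ht, rfl⟩
    exact hseg t ht.1 ht.2
  have hSc : Convex ℝ S := by
    have : S = AffineMap.lineMap x (x + y) '' Icc (0 : ℝ) m := by
      rw [hS]; congr 1; ext t; simp [AffineMap.lineMap_apply, add_comm]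
    rw [this]
    exact (convex_Icc _ _).affine_image _
  have hS0 : x ∈ S := ⟨0, ⟨le_rfl, by positivity⟩, by simp⟩
  have hSi : ∀ i : ℕ, i ≤ m → x + i • y ∈ S := fun i hi =>
    ⟨i, ⟨by positivity, by exact_mod_cast hi⟩, by simp [Nat.cast_smul_eq_nsmul]⟩
  have hni : ∀ i : ℕ, i ≤ m → ‖x + i • y - x‖ ≤ m * ‖y‖ := by
    intro i hi
    rw [add_sub_cancel_left, ← Nat.cast_smul_eq_nsmul ℝ, norm_smul, Real.norm_natCast]
    gcongr
  have hγ : ∀ i : ℕ, i ≤ m → ‖G (x + i • y) - G x‖ ≤ L * (m * ‖y‖) := by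
    intro i hi
    have := hSc.norm_image_sub_le_of_norm_fderiv_le (𝕜 := ℝ) (f := G) (C := L)
      (fun z hz => (hGf z (hSD hz)).1) (fun z hz => (hGf z (hSD hz)).2) hS0 (hSi i hi)
    exact this.trans (mul_le_mul_of_nonneg_left (hni i hi) hL0)
  rcases le_or_gt (L * ‖y‖) (A' * ‖y‖ ^ a) with hcase | hcase
  · -- the first-order bound for `U ∘ G` is already good enough
    have hP : (fun _ : ℝ => U (G x)) ∈ polyCurve 0 F := by
      simpa using polyCurve_monomial (d := 0) (l := 0) le_rfl (U (G x))
    have hm0 : 0 < m := by rw [hm, compOrder]; omega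
    refine (norm_fwdDiff_le_of_polyCurve hm0 hP (e := B * m * (A' * ‖y‖ ^ a)) ?_).trans ?_
    · intro i hi
      have := hSc.norm_image_sub_le_of_norm_fderiv_le (𝕜 := ℝ) (f := U ∘ G) (C := B * L)
        (fun z hz => (hUf _ (hmap (hSD hz))).1.comp z (hGf z (hSD hz)).1)
        (fun z hz => by
          rw [fderiv_comp z (hUf _ (hmap (hSD hz))).1 (hGf z (hSD hz)).1]
          exact (ContinuousLinearMap.opNorm_comp_le _ _).trans
            (mul_le_mul (hUf _ (hmap (hSD hz))).2 (hGf z (hSD hz)).2 (norm_nonneg _) hB))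
        hS0 (hSi i hi)
      refine this.trans ?_
      calc _ ≤ B * L * (m * ‖y‖) := by gcongr; exact hni i hi
        _ = B * m * (L * ‖y‖) := by ring
        _ ≤ _ := by gcongr
    · have h1 : 0 ≤ A * L ^ a := by positivity
      calc _ = 2 ^ m * m * (B * A') * ‖y‖ ^ a := by ring
        _ ≤ 2 ^ m * (m + CU * R ^ a + CL * e₀ + CL * (CU * R ^ a) * e₀ / c) *
            (A * L ^ a + B * A') * ‖y‖ ^ a := by
          gcongr
          · have : 0 ≤ CU * R ^ a + CL * e₀ + CL * (CU * R ^ a) * e₀ / c := by positivity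
            linarith
          · linarith
  -- now `r = L * ‖y‖` dominates the distance from `G` to its polynomial approximation
  have hr : 0 < L * ‖y‖ := lt_of_le_of_lt (by positivity) hcase
  set r := L * ‖y‖ with hrdef
  have hLp : 0 < L := by
    rcases hL0.eq_or_lt with h | h
    · rw [hrdef, ← h, zero_mul] at hr; exact absurd hr (lt_irrefl _)
    · exact h
  have hyp : 0 < ‖y‖ := by
    rcases (norm_nonneg y).eq_or_lt with h | h
    · rw [hrdef, ← h, mul_zero] at hr; exact absurd hr (lt_irrefl _)
    · exact h
  have hra : r ^ a = L ^ a * ‖y‖ ^ a := Real.mul_rpow hL0 hyp.le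
  obtain ⟨cG, hcG⟩ := hG G A' hGc hGA hGd x (m * ‖y‖) (by positivity)
  obtain ⟨v, hv, hball⟩ := hcone (G x) (hmap (hSD hS0))
  replace hball := hball r hr hyr
  set z₁ := G x + r • v with hz₁
  obtain ⟨cU, hcU⟩ := hU U A hUc hUA hUd z₁ (R * r) (by positivity)
  set ep : ℝ := e₀ * (A' * ‖y‖ ^ a) with hep
  have hepr : ep ≤ e₀ * r := mul_le_mul_of_nonneg_left hcase.le he₀0
  set p : ℝ → E' := fun t => ∑ l ∈ Finset.range (k + 1 + 1), t ^ l • cG l (fun _ => y) with hp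
  have hpi : ∀ i : ℕ, i ≤ m → ‖G (x + i • y) - p i‖ ≤ ep := by
    intro i hi
    have h1 := hcG (x + i • y) (hni i hi)
    have h2 : polyMap (k + 1) cG (x + i • y - x) = p i := by
      rw [add_sub_cancel_left, ← Nat.cast_smul_eq_nsmul ℝ, polyMap, hp]
      refine Finset.sum_congr rfl fun l _ => ?_
      have := (cG l).toMultilinearMap.map_smul_univ (fun _ => (i : ℝ)) (fun _ => y)
      simpa using this
    rw [h2] at h1
    refine h1.trans (le_of_eq ?_)
    rw [Real.mul_rpow (by positivity) hyp.le, hep, he₀]; ring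
  have hzx : ‖G x - z₁‖ ≤ M * r := by
    rw [hz₁, sub_add_cancel_left, norm_neg, norm_smul, Real.norm_of_nonneg hr.le, mul_comm]
    gcongr
  have hγz : ∀ i : ℕ, i ≤ m → ‖G (x + i • y) - z₁‖ ≤ (M + m) * r := by
    intro i hi
    calc _ = ‖(G (x + i • y) - G x) + (G x - z₁)‖ := by congr 1; abel
      _ ≤ L * (m * ‖y‖) + M * r := (norm_add_le _ _).trans (add_le_add (hγ i hi) hzx)
      _ = _ := by rw [hrdef]; ring
  have hpz : ∀ i : ℕ, i ≤ m → ‖p i - z₁‖ ≤ (M + m + e₀) * r := by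
    intro i hi
    calc _ = ‖(G (x + i • y) - z₁) - (G (x + i • y) - p i)‖ := by congr 1; abel
      _ ≤ (M + m) * r + e₀ * r :=
        (norm_sub_le _ _).trans (add_le_add (hγz i hi) ((hpi i hi).trans hepr))
      _ = _ := by ring
  set X : ℝ := CU * A * (R * r) ^ a + B * (c * r) with hX
  -- on the ball inside `Dt`, the polynomial is close to `U`, and `U` varies by at most `B * (c * r)`
  have hqX : ∀ w, ‖w‖ < c * r → ‖polyMap (k + 1) cU w - U z₁‖ ≤ X := by
    intro w hw
    have h1 := hcU (z₁ + w) (by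
      rw [add_sub_cancel_left]
      refine hw.le.trans ?_
      gcongr
      rw [hR]; linarith)
    rw [add_sub_cancel_left] at h1
    have hw' : z₁ + w ∈ ball z₁ (c * r) := by simpa [mem_ball_iff_norm] using hw
    have h2 := (convex_ball z₁ (c * r)).norm_image_sub_le_of_norm_fderiv_le (𝕜 := ℝ) (f := U)
      (C := B) (fun z hz => (hUf z (hball hz)).1) (fun z hz => (hUf z (hball hz)).2)
      (mem_ball_self (by positivity)) hw'
    rw [add_sub_cancel_left] at h2
    calc _ = ‖(U (z₁ + w) - U z₁) - (U (z₁ + w) - polyMap (k + 1) cU w)‖ := by congr 1; abel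
      _ ≤ B * ‖w‖ + CU * A * (R * r) ^ a := (norm_sub_le _ _).trans (add_le_add h2 h1)
      _ ≤ X := by
        rw [hX, add_comm]
        gcongr
  have hP : (fun t : ℝ => polyMap (k + 1) cU (p t - z₁)) ∈ polyCurve ((k + 1) * (k + 1)) F := by
    have h := polyMap_comp_mem (k + 1) (k + 1) cU
      (fun l => cG l (fun _ => y) - if l = 0 then z₁ else 0)
    have e : ∀ t : ℝ, ∑ l ∈ Finset.range (k + 1 + 1), t ^ l •
        (cG l (fun _ => y) - if l = 0 then z₁ else 0) = p t - z₁ := by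
      intro t
      simp [hp, smul_sub, Finset.sum_sub_distrib]
    simpa only [e] using h
  refine (norm_fwdDiff_le_of_polyCurve (m := m) (by rw [hm, compOrder]; omega) hP
    (e := CU * A * (R * r) ^ a + CL * X / (c * r) * ep) ?_).trans ?_
  · intro i hi
    have h1 := hcU (G (x + i • y)) ((hγz i hi).trans (by
      gcongr
      rw [hR]; linarith))
    have hRc : R / c * (c * r) = R * r := by field_simp
    have h2 := hL E' F cU (U z₁) (c * r) X (by positivity) hqX (p i - z₁) (G (x + i • y) - z₁)
      (by
        rw [hRc]
        refine (hpz i hi).trans ?_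
        gcongr
        rw [hR]; linarith)
      (by
        rw [hRc]
        refine (hγz i hi).trans ?_
        gcongr
        rw [hR]; linarith)
    rw [sub_sub_sub_cancel_right] at h2
    have hX0 : 0 ≤ X := by positivity
    calc _ = ‖(U (G (x + i • y)) - polyMap (k + 1) cU (G (x + i • y) - z₁)) +
          (polyMap (k + 1) cU (G (x + i • y) - z₁) - polyMap (k + 1) cU (p i - z₁))‖ := by
          simp only [Function.comp]; congr 1; abel
      _ ≤ CU * A * (R * r) ^ a + CL * X / (c * r) * ‖G (x + i • y) - p i‖ :=
          (norm_add_le _ _).trans (add_le_add h1 h2)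
      _ ≤ _ := by
        gcongr
        exact hpi i hi
  · have e1 : CL * X / (c * r) * ep =
        CL * (CU * A * R ^ a * r ^ a) / c * (ep / r) + CL * B * ep := by
      rw [hX, Real.mul_rpow hR0.le hr.le]
      field_simp
    have e2 : CL * (CU * A * R ^ a * r ^ a) / c * (ep / r) ≤
        CL * (CU * A * R ^ a * r ^ a) / c * e₀ := by
      gcongr
      rwa [div_le_iff₀ hr]
    calc _ ≤ 2 ^ m * (CU * A * (R ^ a * r ^ a) + (CL * (CU * A * R ^ a * r ^ a) / c * e₀
          + CL * B * ep)) := by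
          rw [Real.mul_rpow hR0.le hr.le, e1]
          gcongr
      _ = 2 ^ m * ((CU * R ^ a + CL * (CU * R ^ a) * e₀ / c) * (A * L ^ a) +
            CL * e₀ * (B * A')) * ‖y‖ ^ a := by
          rw [hra, hep]; ring
      _ ≤ _ := by
        have h1 : 0 ≤ A * L ^ a := by positivity
        have h2 : 0 ≤ B * A' := by positivity
        rw [mul_assoc (2 ^ m)  _ (A * L ^ a + B * A')]
        gcongr
        have h3 : 0 ≤ CU * R ^ a := by positivity
        have h4 : 0 ≤ CL * e₀ := by positivity
        have h5 : 0 ≤ CL * (CU * R ^ a) * e₀ / c := by positivity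
        rw [mul_add]
        gcongr
        · linarith
        · linarith

/-! ### Summation of dyadic pieces -/

/-- A series whose terms obey both a decaying and a growing geometric bound is split at `n`. -/
lemma norm_tsum_le_split {G : Type*} [NormedAddCommGroup G] [CompleteSpace G] {g : ℕ → G}
    {α β ρ σ : ℝ} (hβ : 0 ≤ β) (hρ0 : 0 ≤ ρ) (hρ : ρ < 1) (hσ : 1 < σ)
    (h1 : ∀ j, ‖g j‖ ≤ α * ρ ^ j) (h2 : ∀ j, ‖g j‖ ≤ β * σ ^ j) (n : ℕ) :
    ‖∑' j, g j‖ ≤ β * (σ / (σ - 1) * σ ^ n) + α * ρ ^ (n + 1) * (1 - ρ)⁻¹ := by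
  have hgeo : Summable fun j => α * ρ ^ j := (summable_geometric_of_lt_one hρ0 hρ).mul_left α
  have hs : Summable g := Summable.of_norm_bounded hgeo h1
  rw [← hs.sum_add_tsum_nat_add (n + 1)]
  refine (norm_add_le _ _).trans (add_le_add ?_ ?_)
  · calc ‖∑ j ∈ Finset.range (n + 1), g j‖ ≤ ∑ j ∈ Finset.range (n + 1), β * σ ^ j :=
        norm_sum_le_of_le _ fun j _ => h2 j
      _ = β * ∑ j ∈ Finset.range (n + 1), σ ^ j := by rw [Finset.mul_sum]
      _ ≤ _ := mul_le_mul_of_nonneg_left (geom_sum_le hσ n) hβ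
  · refine tsum_of_norm_bounded
      ((hasSum_geometric_of_lt_one hρ0 hρ).mul_left (α * ρ ^ (n + 1))) fun j => ?_
    refine (h1 _).trans (le_of_eq ?_)
    rw [pow_add]; ring

/-- Choosing the splitting index at the scale of `t` turns the two geometric bounds into the
power `t ^ s`. -/
lemma norm_tsum_le_rpow {G : Type*} [NormedAddCommGroup G] [CompleteSpace G] {g : ℕ → G}
    {A s t : ℝ} (hA : 0 ≤ A) (hs0 : 0 < s) (hs1 : s ≤ 1) (ht : 0 < t)
    (h1 : ∀ j, ‖g j‖ ≤ 4 * A * ((2 : ℝ) ^ (-s)) ^ j)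
    (h2 : ∀ j, ‖g j‖ ≤ A * t ^ 2 * ((2 : ℝ) ^ (2 - s)) ^ j) :
    ‖∑' j, g j‖ ≤ (2 * ((2 : ℝ) ^ (2 - s) / ((2 : ℝ) ^ (2 - s) - 1))
      + 4 * (1 - (2 : ℝ) ^ (-s))⁻¹) * A * t ^ s := by
  have hρ0 : (0 : ℝ) ≤ (2 : ℝ) ^ (-s) := by positivity
  have hρ1 : (2 : ℝ) ^ (-s) < 1 := Real.rpow_lt_one_of_one_lt_of_neg (by norm_num) (by linarith)
  have hσ : 1 < (2 : ℝ) ^ (2 - s) := Real.one_lt_rpow (by norm_num) (by linarith)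
  have hρi : 0 ≤ (1 - (2 : ℝ) ^ (-s))⁻¹ := inv_nonneg.2 (by linarith)
  have hσi : 0 ≤ (2 : ℝ) ^ (2 - s) / ((2 : ℝ) ^ (2 - s) - 1) :=
    div_nonneg (by positivity) (by linarith)
  rcases le_or_gt t 1 with ht1 | ht1
  · obtain ⟨n, hn1, hn2⟩ := exists_nat_pow_near_of_lt_one ht ht1
      (by norm_num : (0 : ℝ) < 1 / 2) (by norm_num)
    have hpow : ∀ i : ℕ, ((2 : ℝ) ^ (-s)) ^ i = ((1 / 2 : ℝ) ^ i) ^ s := by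
      intro i
      rw [← Real.rpow_natCast, ← Real.rpow_natCast, ← Real.rpow_mul (by norm_num),
        ← Real.rpow_mul (by norm_num), one_div, Real.inv_rpow (by norm_num),
        ← Real.rpow_neg (by norm_num)]
      ring_nf
    have hb1 : ((2 : ℝ) ^ (-s)) ^ (n + 1) ≤ t ^ s := by
      rw [hpow]; exact Real.rpow_le_rpow (by positivity) hn1.le hs0.le
    have hb0 : ((2 : ℝ) ^ (-s)) ^ n ≤ 2 * t ^ s := by
      have h2s : (1 : ℝ) / 2 ≤ (2 : ℝ) ^ (-s) := by
        have := Real.rpow_le_rpow_of_exponent_le (by norm_num : (1 : ℝ) ≤ 2)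
          (by linarith : (-1 : ℝ) ≤ -s)
        rwa [Real.rpow_neg_one, ← one_div] at this
      have hp : (0 : ℝ) ≤ ((2 : ℝ) ^ (-s)) ^ n := by positivity
      rw [pow_succ] at hb1
      nlinarith
    have hb2 : t ^ 2 * ((2 : ℝ) ^ (2 - s)) ^ n ≤ 2 * t ^ s := by
      have e : (2 : ℝ) ^ (2 - s) = 4 * (2 : ℝ) ^ (-s) := by
        rw [sub_eq_add_neg, Real.rpow_add (by norm_num)]; norm_num
      have e4 : t ^ 2 * 4 ^ n ≤ 1 := by
        have : t ^ 2 ≤ ((1 / 2 : ℝ) ^ n) ^ 2 := pow_le_pow_left₀ ht.le hn2 2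
        have e3 : ((1 / 2 : ℝ) ^ n) ^ 2 * 4 ^ n = 1 := by
          rw [← pow_mul, mul_comm n 2, pow_mul, ← mul_pow]; norm_num
        rw [← e3]; gcongr
      rw [e, mul_pow, ← mul_assoc]
      calc t ^ 2 * 4 ^ n * ((2 : ℝ) ^ (-s)) ^ n ≤ 1 * ((2 : ℝ) ^ (-s)) ^ n := by gcongr
        _ ≤ _ := by rw [one_mul]; exact hb0
    refine (norm_tsum_le_split (by positivity) hρ0 hρ1 hσ h1 h2 n).trans ?_
    calc A * t ^ 2 * ((2 : ℝ) ^ (2 - s) / ((2 : ℝ) ^ (2 - s) - 1) * ((2 : ℝ) ^ (2 - s)) ^ n)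
          + 4 * A * ((2 : ℝ) ^ (-s)) ^ (n + 1) * (1 - (2 : ℝ) ^ (-s))⁻¹
        = ((2 : ℝ) ^ (2 - s) / ((2 : ℝ) ^ (2 - s) - 1)) * A * (t ^ 2 * ((2 : ℝ) ^ (2 - s)) ^ n)
          + 4 * (1 - (2 : ℝ) ^ (-s))⁻¹ * A * ((2 : ℝ) ^ (-s)) ^ (n + 1) := by ring
      _ ≤ ((2 : ℝ) ^ (2 - s) / ((2 : ℝ) ^ (2 - s) - 1)) * A * (2 * t ^ s)
          + 4 * (1 - (2 : ℝ) ^ (-s))⁻¹ * A * t ^ s := by gcongr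
      _ = _ := by ring
  · have h3 : ‖∑' j, g j‖ ≤ 4 * A * (1 - (2 : ℝ) ^ (-s))⁻¹ :=
      tsum_of_norm_bounded ((hasSum_geometric_of_lt_one hρ0 hρ1).mul_left (4 * A)) h1
    have hts : 1 ≤ t ^ s := Real.one_le_rpow ht1.le hs0.le
    refine h3.trans ?_
    have h4 : 0 ≤ 2 * ((2 : ℝ) ^ (2 - s) / ((2 : ℝ) ^ (2 - s) - 1)) * A * t ^ s := by positivity
    have h5 : 0 ≤ 4 * A * (1 - (2 : ℝ) ^ (-s))⁻¹ := by positivity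
    nlinarith

/-- The constant of `hzNorm_tsum_le`. -/
def sumConst (k : ℕ) (a : ℝ) : ℝ :=
  (k + 1) * (1 - (2 : ℝ) ^ (-(a - k)))⁻¹ + (2 * ((2 : ℝ) ^ (2 - (a - k)) /
    ((2 : ℝ) ^ (2 - (a - k)) - 1)) + 4 * (1 - (2 : ℝ) ^ (-(a - k)))⁻¹)

/-- A series of smooth functions with `‖∇^l V_j‖ ≲ 2^{j(l-a)}` for `l ≤ k+2` sums to an element
of the Hölder–Zygmund space of order `a`. -/
lemma hzNorm_tsum_le {E F : Type} [NormedAddCommGroup E] [NormedSpace ℝ E]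
    [NormedAddCommGroup F] [NormedSpace ℝ F] [CompleteSpace F] {k : ℕ} {a : ℝ}
    (hk : k = ⌈a⌉₊ - 1) (hka : (k : ℝ) < a) (hak : a ≤ k + 1) {V : ℕ → E → F} {A : ℝ}
    (hA : 0 ≤ A) (hV : ∀ j, ContDiff ℝ (∞ : ℕ∞ω) (V j))
    (hb : ∀ j, ∀ l ≤ k + 2, ∀ x,
      ‖iteratedFDeriv ℝ l (V j) x‖ ≤ A * ((2 : ℝ) ^ ((l : ℝ) - a)) ^ j) :
    ContDiff ℝ ((k : ℕ) : ℕ∞) (fun x => ∑' j, V j x) ∧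
      hzNorm a (fun x => ∑' j, V j x) ≤ ENNReal.ofReal (sumConst k a * A) := by
  set s := a - k with hs
  have hs0 : 0 < s := by linarith
  have hs1 : s ≤ 1 := by linarith
  have hρ0 : (0 : ℝ) ≤ (2 : ℝ) ^ (-s) := by positivity
  have hρ1 : (2 : ℝ) ^ (-s) < 1 := Real.rpow_lt_one_of_one_lt_of_neg (by norm_num) (by linarith)
  have hσ : 1 < (2 : ℝ) ^ (2 - s) := Real.one_lt_rpow (by norm_num) (by linarith)
  have hρi : 0 ≤ (1 - (2 : ℝ) ^ (-s))⁻¹ := inv_nonneg.2 (by linarith)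
  have hσi : 0 ≤ (2 : ℝ) ^ (2 - s) / ((2 : ℝ) ^ (2 - s) - 1) :=
    div_nonneg (by positivity) (by linarith)
  have hbl : ∀ l ≤ k, ∀ j x, ‖iteratedFDeriv ℝ l (V j) x‖ ≤ A * ((2 : ℝ) ^ (-s)) ^ j := by
    intro l hl j x
    refine (hb j l (by omega) x).trans ?_
    have : (l : ℝ) ≤ k := by exact_mod_cast hl
    gcongr
    · norm_num
    · linarith
  have hVk : ∀ j, ContDiff ℝ ((k : ℕ) : ℕ∞) (V j) := fun j => (hV j).of_le (by
    exact_mod_cast le_top)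
  have hsm : ∀ l : ℕ, (l : ℕ∞) ≤ (k : ℕ∞) → Summable
      ((fun (_ : ℕ) (j : ℕ) => A * ((2 : ℝ) ^ (-s)) ^ j) l) := fun l _ =>
    (summable_geometric_of_lt_one hρ0 hρ1).mul_left A
  have hbl' : ∀ (l : ℕ) (j : ℕ) (x : E), (l : ℕ∞) ≤ (k : ℕ∞) → ‖iteratedFDeriv ℝ l (V j) x‖ ≤
      (fun (_ : ℕ) (j : ℕ) => A * ((2 : ℝ) ^ (-s)) ^ j) l j := fun l j x hl =>
    hbl l (by exact_mod_cast hl) j x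
  refine ⟨contDiff_tsum hVk hsm hbl', ?_⟩
  have hder : ∀ l ≤ k, iteratedFDeriv ℝ l (fun x => ∑' j, V j x)
      = fun x => ∑' j, iteratedFDeriv ℝ l (V j) x := fun l hl =>
    iteratedFDeriv_tsum hVk hsm hbl' (by exact_mod_cast hl)
  have hsums : ∀ x, Summable fun j => iteratedFDeriv ℝ k (V j) x := fun x =>
    Summable.of_norm_bounded ((summable_geometric_of_lt_one hρ0 hρ1).mul_left A)
      (fun j => hbl k le_rfl j x)
  unfold hzNorm sumConst
  rw [← hk, ← hs, add_mul, ENNReal.ofReal_add (by positivity) (by positivity)]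
  refine add_le_add ?_ ?_
  · have : ∀ l ∈ Finset.range (k + 1),
        (⨆ x, (‖iteratedFDeriv ℝ l (fun x => ∑' j, V j x) x‖₊ : ℝ≥0∞)) ≤
          ENNReal.ofReal ((1 - (2 : ℝ) ^ (-s))⁻¹ * A) := by
      intro l hl
      have hl : l ≤ k := by simpa [Nat.lt_succ_iff] using hl
      refine iSup_le fun x => ?_
      rw [← enorm_eq_nnnorm, ← ofReal_norm]
      refine ENNReal.ofReal_le_ofReal ?_
      rw [hder l hl, mul_comm]
      exact tsum_of_norm_bounded ((hasSum_geometric_of_lt_one hρ0 hρ1).mul_left A)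
        fun j => hbl l hl j x
    refine (Finset.sum_le_sum this).trans (le_of_eq ?_)
    rw [Finset.sum_const, Finset.card_range, nsmul_eq_mul, mul_assoc,
      ENNReal.ofReal_mul (p := (k : ℝ) + 1) (by positivity)]
    congr 1
    rw [← Nat.cast_succ, ENNReal.ofReal_natCast]
  · unfold zygSemi
    refine iSup_le fun y => iSup_le fun hy => iSup_le fun x => ?_
    have hy0 : 0 < ‖y‖ := norm_pos_iff.2 hy
    rw [hder k le_rfl]
    have hpow : ((‖y‖₊ : ℝ≥0∞)) ^ s = ENNReal.ofReal (‖y‖ ^ s) := by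
      rw [← enorm_eq_nnnorm, ← ofReal_norm, ENNReal.ofReal_rpow_of_pos hy0]
    rw [hpow]
    refine ENNReal.div_le_of_le_mul ?_
    rw [← ENNReal.ofReal_mul (by positivity), ← enorm_eq_nnnorm, ← ofReal_norm]
    refine ENNReal.ofReal_le_ofReal ?_
    have e : (∑' j, iteratedFDeriv ℝ k (V j) (x + 2 • y)) + (∑' j, iteratedFDeriv ℝ k (V j) x)
        - 2 • (∑' j, iteratedFDeriv ℝ k (V j) (x + y))
        = ∑' j, (iteratedFDeriv ℝ k (V j) (x + 2 • y) + iteratedFDeriv ℝ k (V j) x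
          - 2 • iteratedFDeriv ℝ k (V j) (x + y)) := by
      rw [← (hsums _).tsum_const_smul, ← (hsums _).tsum_add (hsums _),
        ((hsums _).add (hsums _)).tsum_sub ((hsums _).const_smul _)]
    rw [e]
    refine norm_tsum_le_rpow hA hs0 hs1 hy0 (fun j => ?_) (fun j => ?_)
    · calc _ ≤ ‖iteratedFDeriv ℝ k (V j) (x + 2 • y)‖ + ‖iteratedFDeriv ℝ k (V j) x‖
            + ‖2 • iteratedFDeriv ℝ k (V j) (x + y)‖ := (norm_sub_le _ _).trans (by gcongr; exact norm_add_le _ _)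
        _ ≤ A * ((2 : ℝ) ^ (-s)) ^ j + A * ((2 : ℝ) ^ (-s)) ^ j
            + 2 * (A * ((2 : ℝ) ^ (-s)) ^ j) := by
            have h2 : ‖2 • iteratedFDeriv ℝ k (V j) (x + y)‖ ≤
                2 * ‖iteratedFDeriv ℝ k (V j) (x + y)‖ := by
              simpa using norm_nsmul_le (n := 2) (a := iteratedFDeriv ℝ k (V j) (x + y))
            have := hbl k le_rfl j (x + y)
            gcongr
            · exact hbl k le_rfl j _
            · exact hbl k le_rfl j _
            · linarith
        _ = _ := by ring
    · have hc : ∀ n : ℕ, ContDiff ℝ n (V j) := fun n => (hV j).of_le (by exact_mod_cast le_top)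
      have e2 : iteratedFDeriv ℝ k (V j) (x + 2 • y) + iteratedFDeriv ℝ k (V j) x
          - 2 • iteratedFDeriv ℝ k (V j) (x + y)
          = fwdDiff y (iteratedFDeriv ℝ k (fwdDiff y (V j))) x := by
        rw [iteratedFDeriv_fwdDiff (hc k) y]
        simp only [fwdDiff, two_smul, add_assoc]
        abel
      have hfd : ∀ z, ‖iteratedFDeriv ℝ (k + 1) (fwdDiff y (V j)) z‖
          ≤ A * ((2 : ℝ) ^ (2 - s)) ^ j * ‖y‖ := by
        intro z
        rw [iteratedFDeriv_fwdDiff (hc (k + 1)) y]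
        refine norm_fwdDiff_iteratedFDeriv_le (hc (k + 1 + 1)) (fun x => ?_) y z
        have := hb j (k + 2) le_rfl x
        have e3 : ((k + 2 : ℕ) : ℝ) - a = 2 - s := by rw [hs]; push_cast; ring
        rwa [e3] at this
      rw [e2]
      refine (norm_fwdDiff_iteratedFDeriv_le (contDiff_fwdDiff (hc (k + 1)) y) hfd y x).trans
        (le_of_eq ?_)
      ring

/-! ### Interior cones of Lipschitz domains -/

/-- Near each point of its closure, an open set with Lipschitz boundary is stable under small
displacements in an open cone of directions. -/
lemma exists_cone {N : ℕ} {D : Set (EuclideanSpace ℝ (Fin N))} (hD : IsOpen D)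
    (hDl : LipschitzBoundary D) {p : EuclideanSpace ℝ (Fin N)} (hp : p ∈ closure D) :
    ∃ (v : EuclideanSpace ℝ (Fin N)) (c ρ : ℝ), 0 < c ∧ 0 < ρ ∧
      ∀ x ∈ D, x ∈ ball p ρ → ∀ y ∈ ball v c, ∀ t : ℝ, 0 < t → t < ρ → x + t • y ∈ D := by
  by_cases hpD : p ∈ D
  · obtain ⟨r, hr, hb⟩ := Metric.isOpen_iff.1 hD p hpD
    refine ⟨0, 1, r / 2, one_pos, by linarith, fun x _ hx y hy t ht htr => hb ?_⟩
    rw [mem_ball, dist_eq_norm] at *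
    rw [sub_zero] at hy
    have h1 : ‖t • y‖ ≤ t := by
      rw [norm_smul, Real.norm_of_nonneg ht.le]; nlinarith
    have : x + t • y - p = (x - p) + t • y := by abel
    rw [this]
    linarith [norm_add_le (x - p) (t • y)]
  · obtain ⟨v, hv, K, φ, hφ, r, hr, hloc⟩ := hDl p ⟨hp, by rwa [hD.interior_eq]⟩
    have hK : (0 : ℝ) ≤ K := K.2
    set c : ℝ := 1 / (2 * (1 + 2 * K)) with hc
    have hc0 : 0 < c := by positivity
    have hcK : c * (1 + 2 * K) = 1 / 2 := by rw [hc]; field_simp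
    have hc1 : c ≤ 1 / 2 := by nlinarith
    refine ⟨-v, c, r / 3, hc0, by linarith, fun x hxD hx y hy t ht htr => ?_⟩
    rw [mem_ball, dist_eq_norm] at hx hy
    set e := y - -v with he
    have hy' : y = e - v := by rw [he]; abel
    have hyn : ‖y‖ ≤ 3 / 2 := by
      rw [hy']; linarith [norm_sub_le e v]
    have hxr : x ∈ ball p r := by rw [mem_ball, dist_eq_norm]; linarith
    have hx'r : x + t • y ∈ ball p r := by
      rw [mem_ball, dist_eq_norm]
      have : x + t • y - p = (x - p) + t • y := by abel
      rw [this]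
      have h1 : ‖t • y‖ ≤ t * (3 / 2) := by
        rw [norm_smul, Real.norm_of_nonneg ht.le]; gcongr
      linarith [norm_add_le (x - p) (t • y)]
    rw [hloc _ hx'r]
    have h0 := (hloc _ hxr).1 hxD
    have hvv : ⟪v, v⟫ = 1 := by rw [real_inner_self_eq_norm_sq, hv]; norm_num
    have hev : |⟪e, v⟫| ≤ c := by
      have := abs_real_inner_le_norm e v
      rw [hv, mul_one] at this
      linarith
    have hin : ⟪x + t • y, v⟫ = ⟪x, v⟫ - t + t * ⟪e, v⟫ := by
      rw [hy', inner_add_left, inner_smul_left, inner_sub_left, hvv]; simp; ring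
    have hproj : (x + t • y - ⟪x + t • y, v⟫ • v) - (x - ⟪x, v⟫ • v) = t • (e - ⟪e, v⟫ • v) := by
      rw [hin, hy']; module
    have hpn : ‖t • (e - ⟪e, v⟫ • v)‖ ≤ t * (2 * c) := by
      rw [norm_smul, Real.norm_of_nonneg ht.le]
      gcongr
      refine (norm_sub_le _ _).trans ?_
      rw [norm_smul, hv, Real.norm_eq_abs]; linarith
    have hlip := hφ.dist_le_mul (x + t • y - ⟪x + t • y, v⟫ • v) (x - ⟪x, v⟫ • v)
    rw [dist_eq_norm, dist_eq_norm, hproj, Real.norm_eq_abs] at hlip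
    have hl2 := (abs_le.1 (hlip.trans (mul_le_mul_of_nonneg_left hpn hK))).1
    have hl3 : t * ⟪e, v⟫ ≤ t * c := by gcongr; exact (le_abs_self _).trans hev
    rw [hin]
    rw [hin] at hl2
    have : t * (c * (1 + 2 * K)) = t / 2 := by rw [hcK]; ring
    nlinarith

/-- Uniform interior cone condition for bounded open sets with Lipschitz boundary. -/
lemma exists_uniform_cone {N : ℕ} {D : Set (EuclideanSpace ℝ (Fin N))} (hD : IsOpen D)
    (hDb : Bornology.IsBounded D) (hDl : LipschitzBoundary D) :
    ∃ M c r₀ : ℝ, 0 < M ∧ 0 < c ∧ 0 < r₀ ∧ ∀ z ∈ D, ∃ v : EuclideanSpace ℝ (Fin N), ‖v‖ ≤ M ∧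
      ∀ t : ℝ, 0 < t → t ≤ r₀ → ball (z + t • v) (c * t) ⊆ D := by
  have hcpt : IsCompact (closure D) := hDb.isCompact_closure
  have main : ∃ M c r₀ : ℝ, 0 < M ∧ 0 < c ∧ 0 < r₀ ∧ ∀ z ∈ closure D, z ∈ D →
      ∃ v : EuclideanSpace ℝ (Fin N), ‖v‖ ≤ M ∧
      ∀ t : ℝ, 0 < t → t ≤ r₀ → ball (z + t • v) (c * t) ⊆ D := by
    refine hcpt.induction_on (p := fun s => ∃ M c r₀ : ℝ, 0 < M ∧ 0 < c ∧ 0 < r₀ ∧ ∀ z ∈ s, z ∈ D →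
      ∃ v : EuclideanSpace ℝ (Fin N), ‖v‖ ≤ M ∧
      ∀ t : ℝ, 0 < t → t ≤ r₀ → ball (z + t • v) (c * t) ⊆ D) ?_ ?_ ?_ ?_
    · exact ⟨1, 1, 1, one_pos, one_pos, one_pos, fun z hz => absurd hz (notMem_empty z)⟩
    · rintro s t hst ⟨M, c, r₀, hM, hc, hr, h⟩
      exact ⟨M, c, r₀, hM, hc, hr, fun z hz => h z (hst hz)⟩
    · rintro s t ⟨M, c, r, hM, hc, hr, h⟩ ⟨M', c', r', hM', hc', hr', h'⟩
      refine ⟨max M M', min c c', min r r', lt_max_of_lt_left hM, lt_min hc hc', lt_min hr hr',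
        fun z hz hzD => ?_⟩
      rcases hz with hz | hz
      · obtain ⟨v, hv, hb⟩ := h z hz hzD
        refine ⟨v, hv.trans (le_max_left _ _), fun t ht htr => ?_⟩
        exact (ball_subset_ball (by gcongr; exact min_le_left _ _)).trans
          (hb t ht (htr.trans (min_le_left _ _)))
      · obtain ⟨v, hv, hb⟩ := h' z hz hzD
        refine ⟨v, hv.trans (le_max_right _ _), fun t ht htr => ?_⟩
        exact (ball_subset_ball (by gcongr; exact min_le_right _ _)).trans
          (hb t ht (htr.trans (min_le_right _ _)))
    · intro p hp
      obtain ⟨v, c, ρ, hc, hρ, h⟩ := exists_cone hD hDl hp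
      refine ⟨ball p ρ, mem_nhdsWithin_of_mem_nhds (ball_mem_nhds p hρ), ‖v‖ + 1, c, ρ / 2,
        by positivity, hc, by linarith, fun z hz hzD => ⟨v, by linarith, fun t ht htr w hw => ?_⟩⟩
      have := h z hzD hz (t⁻¹ • (w - z)) ?_ t ht (by linarith)
      · rwa [smul_inv_smul₀ ht.ne', add_sub_cancel] at this
      · rw [mem_ball, dist_eq_norm] at hw ⊢
        have e : t⁻¹ • (w - z) - v = t⁻¹ • (w - (z + t • v)) := by
          rw [sub_add_eq_sub_sub, smul_sub t⁻¹ (w - z), inv_smul_smul₀ ht.ne']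
        rw [e, norm_smul, norm_inv, Real.norm_of_nonneg ht.le, inv_mul_lt_iff₀ ht]
        linarith
  obtain ⟨M, c, r₀, hM, hc, hr, h⟩ := main
  exact ⟨M, c, r₀, hM, hc, hr, fun z hz => h z (subset_closure hz) hz⟩

/-! ### Localization of the dyadic pieces -/

section localization

variable {E : Type} [NormedAddCommGroup E] [InnerProductSpace ℝ E] [FiniteDimensional ℝ E]
  [MeasurableSpace E] [BorelSpace E] {F : Type} [NormedAddCommGroup F] [NormedSpace ℝ F]

/-- The constant in the Leibniz rule `norm_iteratedFDeriv_smul_le_scale`. -/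
def leibConst (A B : ℕ → ℝ) (n : ℕ) : ℝ :=
  ∑ i ∈ Finset.range (n + 1), (n.choose i : ℝ) * A i * B (n - i)

lemma leibConst_nonneg {A B : ℕ → ℝ} (hA : ∀ i, 0 ≤ A i) (hB : ∀ i, 0 ≤ B i) (n : ℕ) :
    0 ≤ leibConst A B n :=
  Finset.sum_nonneg fun i _ => by have := hA i; have := hB (n - i); positivity

/-- If derivatives of `f` and `g` at `x` scale like powers of `τ⁻¹`, so do those of `f • g`. -/
lemma norm_iteratedFDeriv_smul_le_scale {E F : Type} [NormedAddCommGroup E] [NormedSpace ℝ E]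
    [NormedAddCommGroup F] [NormedSpace ℝ F] {f : E → ℝ} {g : E → F} (hf : ContDiff ℝ (∞ : ℕ∞ω) f)
    (hg : ContDiff ℝ (∞ : ℕ∞ω) g) {A B : ℕ → ℝ} {τ β : ℝ} (x : E)
    (hA : ∀ i, ‖iteratedFDeriv ℝ i f x‖ ≤ A i * (τ ^ i)⁻¹)
    (hB : ∀ i, ‖iteratedFDeriv ℝ i g x‖ ≤ B i * β * (τ ^ i)⁻¹) (n : ℕ) :
    ‖iteratedFDeriv ℝ n (fun y => f y • g y) x‖ ≤ leibConst A B n * β * (τ ^ n)⁻¹ := by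
  refine (norm_iteratedFDeriv_smul_le hf hg x (n := n) (by exact_mod_cast le_top)).trans ?_
  rw [leibConst, Finset.sum_mul, Finset.sum_mul]
  refine Finset.sum_le_sum fun i hi => ?_
  have hi : i ≤ n := by simpa [Nat.lt_succ_iff] using hi
  have e : (τ ^ n)⁻¹ = (τ ^ i)⁻¹ * (τ ^ (n - i))⁻¹ := by
    rw [← mul_inv, ← pow_add, Nat.add_sub_cancel' hi]
  have h1 := hA i
  have h2 := hB (n - i)
  calc (n.choose i : ℝ) * ‖iteratedFDeriv ℝ i f x‖ * ‖iteratedFDeriv ℝ (n - i) g x‖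
      ≤ (n.choose i : ℝ) * (A i * (τ ^ i)⁻¹) * (B (n - i) * β * (τ ^ (n - i))⁻¹) := by
        have : 0 ≤ A i * (τ ^ i)⁻¹ := (norm_nonneg _).trans h1
        gcongr
    _ = _ := by rw [e]; ring

/-- Smooth cutoffs: equal to one on a given set, supported in its `δ`-neighbourhood, with
derivatives of order `l` of size `δ⁻ˡ`. -/
lemma exists_cutoff (E : Type) [NormedAddCommGroup E] [InnerProductSpace ℝ E]
    [FiniteDimensional ℝ E] [MeasurableSpace E] [BorelSpace E] :
    ∃ A : ℕ → ℝ, (∀ l, 0 ≤ A l) ∧ ∀ (Ω : Set E) (δ : ℝ), 0 < δ → ∃ θ : E → ℝ,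
      ContDiff ℝ (∞ : ℕ∞ω) θ ∧ (∀ x ∈ Ω, θ x = 1) ∧
      (∀ l x, ‖iteratedFDeriv ℝ l θ x‖ ≤ A l * (δ ^ l)⁻¹) ∧
      ∀ x ∈ tsupport θ, ∃ x' ∈ Ω, ‖x - x'‖ < δ := by
  obtain ⟨φ, hφ, hc, h0, h1, hsupp⟩ := exists_bump (0 : E) (c := 1) one_pos
  refine ⟨fun l => avgConst φ l * 4 ^ l, fun l => by
    have := avgConst_nonneg φ l; positivity, fun Ω δ hδ => ?_⟩
  rcases Ω.eq_empty_or_nonempty with rfl | hΩ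
  · refine ⟨fun _ => 0, contDiff_const, by simp, fun l x => ?_, fun x hx => ?_⟩
    · have := avgConst_nonneg φ l
      have e : iteratedFDeriv ℝ l (fun _ : E => (0 : ℝ)) x = 0 := by
        simp [iteratedFDeriv_fun_zero]
      rw [e, norm_zero]
      positivity
    · simp [tsupport] at hx
  set q : E → ℝ := fun x => max 0 (min 1 (2 - 3 * infDist x Ω / δ)) with hq
  have hqc : Continuous q := by
    have := continuous_infDist_pt Ω
    fun_prop
  have hq1 : ∀ x, ‖q x‖ ≤ 1 := by
    intro x
    rw [Real.norm_of_nonneg (le_max_left _ _)]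
    exact max_le zero_le_one (min_le_left _ _)
  have hstep : ∀ y ∈ tsupport φ, ‖(δ / 4) • y‖ ≤ δ / 4 := by
    intro y hy
    have : ‖y‖ ≤ 1 := by simpa using hsupp hy
    rw [norm_smul, Real.norm_of_nonneg (by positivity)]
    nlinarith
  have hd4 : 0 < δ / 4 := by positivity
  refine ⟨avg φ (δ / 4) q, avg_contDiff hφ hc hd4 hqc, fun x hx => ?_, fun l x => ?_,
    fun x hx => ?_⟩
  · have : ∀ y, φ y • q (x + (δ / 4) • y) = φ y := by
      intro y
      by_cases hy : y ∈ tsupport φ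
      · have hdist : infDist (x + (δ / 4) • y) Ω ≤ δ / 4 :=
          (infDist_le_dist_of_mem hx).trans (by
            rw [dist_eq_norm, add_sub_cancel_left]; exact hstep y hy)
        have : 1 ≤ 2 - 3 * infDist (x + (δ / 4) • y) Ω / δ := by
          have : 3 * infDist (x + (δ / 4) • y) Ω / δ ≤ 1 := by
            rw [div_le_one hδ]; linarith
          linarith
        simp [hq, min_eq_left this]
      · simp [image_eq_zero_of_notMem_tsupport hy]
    rw [avg]
    simp_rw [this]
    exact h1
  · refine (norm_iteratedFDeriv_avg_le hφ hc hd4 hqc l x zero_le_one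
      (fun y _ => hq1 _)).trans (le_of_eq ?_)
    rw [div_pow, inv_div, mul_one]
    ring
  · have hcl : tsupport (avg φ (δ / 4) q) ⊆ {x | infDist x Ω ≤ 11 / 12 * δ} := by
      refine closure_minimal (fun z hz => ?_)
        (isClosed_le (continuous_infDist_pt Ω) continuous_const)
      by_contra hlt
      rw [mem_ofPred_eq, not_le] at hlt
      refine hz ?_
      have : ∀ y, φ y • q (z + (δ / 4) • y) = 0 := by
        intro y
        by_cases hy : y ∈ tsupport φ
        · have h2 := infDist_le_infDist_add_dist (s := Ω) (x := z) (y := z + (δ / 4) • y)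
          have h3 := hstep y hy
          rw [dist_eq_norm, sub_add_cancel_left, norm_neg] at h2
          have : 2 - 3 * infDist (z + (δ / 4) • y) Ω / δ ≤ 0 := by
            have : 2 ≤ 3 * infDist (z + (δ / 4) • y) Ω / δ := by
              rw [le_div_iff₀ hδ]; linarith
            linarith
          have : q (z + (δ / 4) • y) = 0 :=
            max_eq_left ((min_le_right _ _).trans this)
          rw [this, smul_zero]
        · simp [image_eq_zero_of_notMem_tsupport hy]
      rw [avg]
      simp_rw [this]
      exact integral_zero _ _
    have hx1 : infDist x Ω ≤ 11 / 12 * δ := hcl hx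
    obtain ⟨x', hx', hlt⟩ := (infDist_lt_iff hΩ).1 (show infDist x Ω < δ by linarith)
    exact ⟨x', hx', by rwa [dist_eq_norm] at hlt⟩

/-- One chart: multiplying the dyadic pieces of `w` by a fixed smooth compactly supported `χ` and
by cutoffs at their own scale gives globally defined pieces which sum to `χ • w` on `Ω₀`. -/
lemma exists_chart [CompleteSpace F] {Ω₀ : Set E} (v : E) {c H : ℝ} (hc0 : 0 < c)
    (hH : 0 < H) (hH1 : H ≤ 1) (m k : ℕ) {a : ℝ} (ha : 0 < a) {χ : E → ℝ}
    (hχ : ContDiff ℝ (∞ : ℕ∞ω) χ) (hχc : HasCompactSupport χ) :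
    ∃ C : ℝ, 0 ≤ C ∧ ∀ (Ω₁ : Set E) (X S : ℝ) (w : E → F), 0 ≤ X → 0 ≤ S →
      DyadHyp Ω₀ Ω₁ v c H m a X S w → ∃ V : ℕ → E → F, (∀ j, ContDiff ℝ (∞ : ℕ∞ω) (V j)) ∧
        (∀ j, ∀ l ≤ k, ∀ x, ‖iteratedFDeriv ℝ l (V j) x‖ ≤
          C * (X + S) * ((2 : ℝ) ^ ((l : ℝ) - a)) ^ j) ∧
        ∀ x, x ∈ Ω₀ ∨ χ x = 0 → HasSum (fun j => V j x) (χ x • w x) := by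
  obtain ⟨φ, hφ, hc, h0, h1, hsupp⟩ := exists_bump v (c := c / 2) (by positivity)
  obtain ⟨A, hA, hcut⟩ := exists_cutoff E
  have hχb : ∀ i : ℕ, ∃ B : ℝ, ∀ x, ‖iteratedFDeriv ℝ i χ x‖ ≤ B := fun i =>
    (hχ.continuous_iteratedFDeriv (m := i) (by exact_mod_cast le_top)).bounded_above_of_compact_support
      (hχc.iteratedFDeriv i)
  choose B hB using hχb
  have hB0 : ∀ i, 0 ≤ B i := fun i => (norm_nonneg _).trans (hB i 0)
  set A' : ℕ → ℝ := fun i => A i * ((c / 2) ^ i)⁻¹ with hA'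
  have hA'0 : ∀ i, 0 ≤ A' i := fun i => by have := hA i; positivity
  set Q : ℕ → ℝ := leibConst (leibConst B A') (dyadConst φ m H a) with hQ
  have hQ0 : ∀ i, 0 ≤ Q i := leibConst_nonneg (leibConst_nonneg hB0 hA'0)
    (dyadConst_nonneg φ m hH a)
  have hterm : ∀ l, 0 ≤ Q l * (H ^ a * (H ^ l)⁻¹) := fun l => by
    have := hQ0 l; positivity
  refine ⟨∑ l ∈ Finset.range (k + 1), Q l * (H ^ a * (H ^ l)⁻¹),
    Finset.sum_nonneg fun l _ => hterm l, fun Ω₁ X S w hX hS hd => ?_⟩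
  set h : ℕ → ℝ := fun j => H / 2 ^ j with hh
  have hpos : ∀ j, 0 < h j := fun j => by positivity
  have hle1 : ∀ j, h j ≤ 1 := fun j =>
    (div_le_self hH.le (one_le_pow₀ (by norm_num))).trans hH1
  have hscale : ∀ j l : ℕ, (h j) ^ a * ((h j) ^ l)⁻¹ =
      H ^ a * (H ^ l)⁻¹ * ((2 : ℝ) ^ ((l : ℝ) - a)) ^ j := by
    intro j l
    rw [← dyadic_rpow, hh]
    simp only
    rw [div_eq_mul_one_div, Real.mul_rpow hH.le (by positivity), mul_pow, mul_inv]
    ring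
  choose θ hθ hθ1 hθb hθs using fun j => hcut Ω₀ (c / 2 * h j) (by have := hpos j; positivity)
  have hdc : ∀ j, ContDiff ℝ (∞ : ℕ∞ω) (dyad φ m H w j) := fun j =>
    dyad_contDiff hφ hc m hH hd.cont j
  have hη : ∀ j, ContDiff ℝ (∞ : ℕ∞ω) (fun x => χ x • θ j x) := fun j => hχ.smul (hθ j)
  refine ⟨fun j x => (χ x • θ j x) • dyad φ m H w j x, fun j => (hη j).smul (hdc j),
    fun j l hl x => ?_, fun x hx => ?_⟩
  · have hr : 0 ≤ (X + S) * ((2 : ℝ) ^ ((l : ℝ) - a)) ^ j := by positivity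
    by_cases hx : x ∈ tsupport (θ j)
    · obtain ⟨x', hx', hxx⟩ := hθs j x hx
      have b1 : ∀ i, ‖iteratedFDeriv ℝ i (fun x => χ x • θ j x) x‖ ≤
          leibConst B A' i * 1 * ((h j) ^ i)⁻¹ := by
        refine norm_iteratedFDeriv_smul_le_scale hχ (hθ j) x (fun i => ?_) (fun i => ?_)
        · refine (hB i x).trans (le_mul_of_one_le_right (hB0 i) ?_)
          exact (one_le_inv₀ (pow_pos (hpos j) i)).2 (pow_le_one₀ (hpos j).le (hle1 j))
        · refine (hθb j i x).trans (le_of_eq ?_)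
          rw [hA', mul_pow, mul_inv]
          ring
      have b2 := norm_iteratedFDeriv_smul_le_scale (hη j) (hdc j) x
        (A := leibConst B A') (B := dyadConst φ m H a) (β := (X + S) * (h j) ^ a)
        (fun i => by simpa using b1 i)
        (fun i => (norm_iteratedFDeriv_dyad_le hφ hc h0 h1 hd hsupp hH hX hS j i x x' hx'
          hxx).trans (le_of_eq (by ring))) l
      refine b2.trans ?_
      calc Q l * ((X + S) * (h j) ^ a) * ((h j) ^ l)⁻¹
          = Q l * (X + S) * ((h j) ^ a * ((h j) ^ l)⁻¹) := by ring
        _ = (Q l * (H ^ a * (H ^ l)⁻¹)) * ((X + S) * ((2 : ℝ) ^ ((l : ℝ) - a)) ^ j) := by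
          rw [hscale]; ring
        _ ≤ (∑ l ∈ Finset.range (k + 1), Q l * (H ^ a * (H ^ l)⁻¹)) *
            ((X + S) * ((2 : ℝ) ^ ((l : ℝ) - a)) ^ j) := by
          refine mul_le_mul_of_nonneg_right ?_ hr
          exact Finset.single_le_sum (f := fun l => Q l * (H ^ a * (H ^ l)⁻¹))
            (fun l _ => hterm l) (Finset.mem_range.2 (Nat.lt_succ_of_le hl))
        _ = _ := by ring
    · have hx2 : x ∉ tsupport (fun x => (χ x • θ j x) • dyad φ m H w j x) := by
        refine fun hmem => hx (closure_mono (fun z hz => ?_) hmem)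
        intro hz0
        exact hz (by simp [hz0])
      have hzero : iteratedFDeriv ℝ l (fun x => (χ x • θ j x) • dyad φ m H w j x) x = 0 := by
        by_contra hne
        exact hx2 (support_iteratedFDeriv_subset l hne)
      rw [hzero, norm_zero, mul_assoc]
      exact mul_nonneg (Finset.sum_nonneg fun l _ => hterm l) hr
  · rcases hx with hx | hx
    · have hsum : HasSum (fun j => dyad φ m H w j x) (w x) := by
        have hbd : ∀ j, ‖dyad φ m H w j x‖ ≤
            dyadConst φ m H a 0 * (X + S) * H ^ a * ((2 : ℝ) ^ (-a)) ^ j := by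
          intro j
          have := norm_iteratedFDeriv_dyad_le hφ hc h0 h1 hd hsupp hH hX hS j 0 x x hx
            (by rw [sub_self, norm_zero]; positivity)
          rw [norm_iteratedFDeriv_zero, mul_assoc _ ((H / 2 ^ j) ^ a)] at this
          have e := hscale j 0
          simp only [hh] at e
          rw [e] at this
          refine this.trans (le_of_eq ?_)
          simp only [pow_zero, inv_one, Nat.cast_zero, zero_sub]; ring
        have hr1 : (2 : ℝ) ^ (-a) < 1 :=
          Real.rpow_lt_one_of_one_lt_of_neg (by norm_num) (by linarith)
        have hs : Summable fun j => dyad φ m H w j x := Summable.of_norm_bounded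
          ((summable_geometric_of_lt_one (by positivity) hr1).mul_left _) hbd
        rw [hs.hasSum_iff_tendsto_nat, ← Filter.tendsto_add_atTop_iff_nat 1,
          tendsto_iff_norm_sub_tendsto_zero]
        refine squeeze_zero (fun _ => norm_nonneg _) (fun n => ?_) (g := fun n =>
          (1 + approxConst φ m 0) * X * H ^ a * ((2 : ℝ) ^ (-a)) ^ n) ?_
        · rw [norm_sub_rev]
          refine (dyad_tendsto hφ hc h0 h1 hd hsupp hH hc0 hX n x hx).trans (le_of_eq ?_)
          have e := hscale n 0
          simp only [hh, pow_zero, inv_one, mul_one, Nat.cast_zero, zero_sub] at e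
          rw [e]; ring
        · have := (tendsto_pow_atTop_nhds_zero_of_lt_one (by positivity) hr1).const_mul
            ((1 + approxConst φ m 0) * X * H ^ a)
          simpa using this
      have e : (fun j => (χ x • θ j x) • dyad φ m H w j x) =
          fun j => χ x • dyad φ m H w j x := by
        ext1 j; rw [hθ1 j x hx]; simp
      rw [e]
      exact hsum.const_smul (χ x)
    · simp only [hx, zero_smul]
      exact hasSum_zero

end localization

/-! ### Extension from a Lipschitz domain -/

open scoped Manifold in
/-- A smooth partition of unity on a closed set, subordinate to a finite family of balls. -/
lemma exists_partition {E : Type} [NormedAddCommGroup E] [InnerProductSpace ℝ E]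
    [FiniteDimensional ℝ E] {ι : Type} [Fintype ι] {s : Set E} (hs : IsClosed s) (p : ι → E)
    (r : ι → ℝ) (hsub : s ⊆ ⋃ i, ball (p i) (r i)) :
    ∃ χ : ι → E → ℝ, (∀ i, ContDiff ℝ (∞ : ℕ∞ω) (χ i)) ∧ (∀ i, HasCompactSupport (χ i)) ∧
      (∀ i x, x ∉ ball (p i) (r i) → χ i x = 0) ∧ ∀ x ∈ s, ∑ i, χ i x = 1 := by
  obtain ⟨f, hf⟩ := SmoothPartitionOfUnity.exists_isSubordinate 𝓘(ℝ, E) hs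
    (fun i => ball (p i) (r i)) (fun i => isOpen_ball) hsub
  refine ⟨fun i => f i, fun i => (f i).contMDiff.contDiff, fun i => ?_, fun i x hx => ?_,
    fun x hx => ?_⟩
  · exact HasCompactSupport.intro' (isCompact_closedBall (p i) (r i)) isClosed_closedBall
      fun x hx => image_eq_zero_of_notMem_tsupport fun h => hx (ball_subset_closedBall (hf i h))
  · exact image_eq_zero_of_notMem_tsupport fun h => hx (hf i h)
  · rw [← f.sum_eq_one hx, finsum_eq_sum_of_fintype]

/-- Near a point of the closure, difference bounds inside `D` give the hypotheses needed for the
dyadic decomposition. -/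
lemma exists_dyadHyp {N : ℕ} {D : Set (EuclideanSpace ℝ (Fin N))} (hD : IsOpen D)
    (hDl : LipschitzBoundary D) {F : Type} [NormedAddCommGroup F] [NormedSpace ℝ F]
    (m : ℕ) {a κ : ℝ} (ha : 0 < a) (hκ : 0 < κ) {p : EuclideanSpace ℝ (Fin N)}
    (hp : p ∈ closure D) :
    ∃ (v : EuclideanSpace ℝ (Fin N)) (c H ρ R : ℝ) (Ω₁ : Set (EuclideanSpace ℝ (Fin N))),
      0 < c ∧ 0 < H ∧ H ≤ 1 ∧ 0 < ρ ∧ 0 ≤ R ∧ ∀ (X S : ℝ) (w : EuclideanSpace ℝ (Fin N) → F),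
        0 ≤ X → Continuous w →
        (∀ x y, (∀ t : ℝ, 0 ≤ t → t ≤ m → x + t • y ∈ D) → ‖y‖ ≤ κ →
          ‖(fwdDiff y)^[m] w x‖ ≤ X * ‖y‖ ^ a) →
        (∀ x ∈ D, ‖w x‖ ≤ S) → DyadHyp (D ∩ ball p ρ) Ω₁ v c H m a (R * X) S w := by
  obtain ⟨v, c, ρ, hc, hρ, hcone⟩ := exists_cone hD hDl hp
  set b : ℝ := ‖v‖ + c with hb
  have hb0 : 0 < b := by positivity
  set H : ℝ := min 1 (min (ρ / (2 * (m + 1))) (min (ρ / (4 * (m + 1) * b)) (κ / b))) with hH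
  have hH0 : 0 < H := by
    refine lt_min one_pos (lt_min ?_ (lt_min ?_ ?_)) <;> positivity
  have hH1 : H ≤ 1 := min_le_left _ _
  have hH2 : m * H < ρ := by
    have : H ≤ ρ / (2 * (m + 1)) := (min_le_right _ _).trans (min_le_left _ _)
    rw [le_div_iff₀ (by positivity)] at this
    nlinarith
  have hH3 : m * H * b < ρ / 2 := by
    have : H ≤ ρ / (4 * (m + 1) * b) :=
      (min_le_right _ _).trans ((min_le_right _ _).trans (min_le_left _ _))
    rw [le_div_iff₀ (by positivity)] at this
    have h0 : 0 ≤ m * H * b := by positivity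
    have h1 : 0 < H * b := by positivity
    nlinarith
  have hH4 : H * b ≤ κ := by
    have : H ≤ κ / b :=
      (min_le_right _ _).trans ((min_le_right _ _).trans (min_le_right _ _))
    rwa [le_div_iff₀ hb0] at this
  have hyb : ∀ y ∈ ball v c, ‖y‖ ≤ b := by
    intro y hy
    rw [mem_ball, dist_eq_norm] at hy
    have := norm_add_le v (y - v)
    rw [add_sub_cancel] at this
    linarith
  have hhalf : closedBall v (c / 2) ⊆ ball v c := closedBall_subset_ball (by linarith)
  refine ⟨v, c, H, ρ / 2, b ^ a, D ∩ ball p ρ, hc, hH0, hH1, by linarith, by positivity,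
    fun X S w hX hw hdiff hbd => ⟨hw, ?_, ?_, ?_, ?_⟩⟩
  · exact inter_subset_inter_right _ (ball_subset_ball (by linarith))
  · rintro x ⟨hxD, hx⟩ y hy t ht htm
    refine ⟨hcone x hxD (ball_subset_ball (by linarith) hx) y hy t ht (by linarith), ?_⟩
    rw [mem_ball, dist_eq_norm] at hx ⊢
    have h1 : ‖t • y‖ ≤ m * H * b := by
      rw [norm_smul, Real.norm_of_nonneg ht.le]
      exact mul_le_mul htm (hyb y hy) (norm_nonneg _) (by positivity)
    have e : x + t • y - p = (x - p) + t • y := by abel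
    rw [e]
    linarith [norm_add_le (x - p) (t • y)]
  · rintro x ⟨hxD, hx⟩ y hy h hh hhH
    have hn : ‖h • y‖ ≤ h * b := by
      rw [norm_smul, Real.norm_of_nonneg hh.le]
      exact mul_le_mul_of_nonneg_left (hyb y (hhalf hy)) hh.le
    refine (hdiff x (h • y) (fun t ht htm => ?_) (hn.trans (le_trans (by gcongr) hH4))).trans ?_
    · rcases ht.eq_or_lt with rfl | ht
      · simpa using hxD
      · rw [smul_smul]
        refine hcone x hxD hx y (hhalf hy) (t * h) (by positivity) (lt_of_le_of_lt ?_ hH2)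
        exact mul_le_mul htm hhH hh.le (by positivity)
    · calc X * ‖h • y‖ ^ a ≤ X * (h * b) ^ a := by gcongr
        _ = b ^ a * X * h ^ a := by rw [Real.mul_rpow hh.le hb0.le]; ring
  · rintro x ⟨hxD, hx⟩ y hy t ht htm
    exact hbd _ (hcone x hxD hx y (hhalf hy) t ht (by linarith))

/-- A continuous function whose `m`-th differences inside a bounded Lipschitz domain have size
`X ‖y‖ ^ a` agrees on the closed domain with a function in the Hölder–Zygmund space of
order `a`. -/
lemma exists_extension {N : ℕ} {D : Set (EuclideanSpace ℝ (Fin N))} (hD : IsOpen D)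
    (hDb : Bornology.IsBounded D) (hDl : LipschitzBoundary D) (F : Type) [NormedAddCommGroup F]
    [NormedSpace ℝ F] [CompleteSpace F] (m : ℕ) {k : ℕ} {a κ : ℝ} (hk : k = ⌈a⌉₊ - 1)
    (hka : (k : ℝ) < a) (hak : a ≤ k + 1) (hκ : 0 < κ) :
    ∃ C : ℝ, 0 ≤ C ∧ ∀ (X S : ℝ) (w : EuclideanSpace ℝ (Fin N) → F), 0 ≤ X → 0 ≤ S →
      Continuous w →
      (∀ x y, (∀ t : ℝ, 0 ≤ t → t ≤ m → x + t • y ∈ D) → ‖y‖ ≤ κ →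
        ‖(fwdDiff y)^[m] w x‖ ≤ X * ‖y‖ ^ a) →
      (∀ x ∈ D, ‖w x‖ ≤ S) → ∃ W : EuclideanSpace ℝ (Fin N) → F,
        ContDiff ℝ ((k : ℕ) : ℕ∞) W ∧ EqOn w W (closure D) ∧
        hzNorm a W ≤ ENNReal.ofReal (C * (X + S)) := by
  have ha : 0 < a := lt_of_le_of_lt (Nat.cast_nonneg k) hka
  choose v c H ρ R Ω₁ hc hH hH1 hρ hR hyp using fun p : closure D =>
    exists_dyadHyp hD hDl (F := F) m ha hκ p.2
  obtain ⟨T, hT⟩ := hDb.isCompact_closure.elim_nhds_subcover'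
    (fun x hx => ball x (ρ ⟨x, hx⟩)) (fun x hx => ball_mem_nhds x (hρ ⟨x, hx⟩))
  obtain ⟨χ, hχ, hχc, hχ0, hχ1⟩ := exists_partition (ι := T) isClosed_closure
    (fun i => (i.1 : EuclideanSpace ℝ (Fin N))) (fun i => ρ i.1) (by
      refine hT.trans (iUnion₂_subset fun x hx => ?_)
      exact subset_iUnion (fun i : T => ball (i.1 : EuclideanSpace ℝ (Fin N)) (ρ i.1)) ⟨x, hx⟩)
  choose C hC hchart using fun i : T => exists_chart (F := F)
    (Ω₀ := D ∩ ball (i.1 : EuclideanSpace ℝ (Fin N)) (ρ i.1)) (v i.1) (hc i.1) (hH i.1) (hH1 i.1)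
    m (k + 2) ha (hχ i) (hχc i)
  set C' : ℝ := ∑ i, C i * (R i.1 + 1) with hC'
  have hC'0 : 0 ≤ C' := Finset.sum_nonneg fun i _ => by
    have := hC i; have := hR i.1; positivity
  refine ⟨|sumConst k a * C'|, abs_nonneg _, fun X S w hX hS hw hdiff hbd => ?_⟩
  choose V hV hVb hVs using fun i : T => hchart i (Ω₁ i.1) (R i.1 * X) S w
    (mul_nonneg (hR i.1) hX) hS (hyp i.1 X S w hX hw hdiff hbd)
  obtain ⟨hW, hWn⟩ := hzNorm_tsum_le (V := fun j x => ∑ i, V i j x) (A := C' * (X + S))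
    hk hka hak (by positivity) (fun j => ContDiff.sum fun i _ => hV i j) (fun j l hl x => by
      rw [iteratedFDeriv_fun_sum_apply
        (fun i _ => ((hV i j).of_le (by exact_mod_cast le_top)).contDiffAt),
        hC', Finset.sum_mul, Finset.sum_mul]
      refine norm_sum_le_of_le _ fun i _ => (hVb i j l hl x).trans ?_
      have := hC i
      have := hR i.1
      have h2 : R i.1 * X + S ≤ (R i.1 + 1) * (X + S) := by nlinarith [mul_nonneg (hR i.1) hS]
      rw [mul_assoc (C i) (R i.1 + 1)]
      gcongr)
  refine ⟨_, hW, ?_, hWn.trans (ENNReal.ofReal_le_ofReal ?_)⟩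
  · refine EqOn.closure (fun x hx => ?_) hw hW.continuous
    have hs : HasSum (fun j => ∑ i, V i j x) (∑ i, χ i x • w x) := by
      refine hasSum_sum fun i _ => hVs i x ?_
      by_cases hxi : x ∈ ball (i.1 : EuclideanSpace ℝ (Fin N)) (ρ i.1)
      · exact Or.inl ⟨hx, hxi⟩
      · exact Or.inr (hχ0 i x hxi)
    rw [← Finset.sum_smul, hχ1 x (subset_closure hx), one_smul] at hs
    exact hs.tsum_eq.symm
  · rw [← mul_assoc]
    exact mul_le_mul_of_nonneg_right (le_abs_self _) (by positivity)

/-! ### Norms on sets -/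

section assembly

variable {E F : Type} [NormedAddCommGroup E] [NormedSpace ℝ E] [NormedAddCommGroup F]
  [NormedSpace ℝ F]

/-- The supremum of `‖∇f‖` over a set, extended-real valued. -/
def gradSup (S : Set E) (f : E → F) : ℝ≥0∞ := ⨆ x ∈ S, (‖iteratedFDeriv ℝ 1 f x‖₊ : ℝ≥0∞)

lemma gradSup_le_holderNorm (S : Set E) (f : E → F) {b : ℝ} (hb : 1 ≤ b) :
    gradSup S f ≤ holderNorm S b f := by
  refine le_trans ?_ le_self_add
  exact Finset.single_le_sum
    (f := fun k => ⨆ x ∈ S, (‖iteratedFDeriv ℝ k f x‖₊ : ℝ≥0∞)) (fun _ _ => zero_le)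
    (Finset.mem_range.2 (Nat.lt_succ_of_le (Nat.le_floor (by simpa using hb))))

lemma norm_fderiv_le_gradSup {S : Set E} (hS : IsOpen S) {f g : E → F} (hfg : EqOn f g S)
    (hfin : gradSup S f ≠ ⊤) {x : E} (hx : x ∈ S) : ‖fderiv ℝ g x‖ ≤ (gradSup S f).toReal := by
  have e : f =ᶠ[nhds x] g := Filter.eventuallyEq_of_mem (hS.mem_nhds hx) hfg
  rw [← e.fderiv_eq, ← norm_iteratedFDeriv_one]
  refine le_of_coe_nnnorm_le ENNReal.toReal_nonneg ?_
  rw [ENNReal.ofReal_toReal hfin]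
  exact le_iSup₂ (f := fun x (_ : x ∈ S) => (‖iteratedFDeriv ℝ 1 f x‖₊ : ℝ≥0∞)) x hx

lemma norm_le_supNormOn {E F : Type} [NormedAddCommGroup F] {S : Set E} {f : E → F}
    (hfin : supNormOn S f ≠ ⊤) {x : E} (hx : x ∈ S) :
    ‖f x‖ ≤ (supNormOn S f).toReal := by
  refine le_of_coe_nnnorm_le ENNReal.toReal_nonneg ?_
  rw [ENNReal.ofReal_toReal hfin]
  exact le_iSup₂ (f := fun x (_ : x ∈ S) => (‖f x‖₊ : ℝ≥0∞)) x hx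

lemma iSup_iteratedFDeriv_le_hzNorm {a : ℝ} {l : ℕ} (hl : l ≤ ⌈a⌉₊ - 1) (f : E → F) (x : E) :
    (‖iteratedFDeriv ℝ l f x‖₊ : ℝ≥0∞) ≤ hzNorm a f := by
  refine le_trans ?_ le_self_add
  refine le_trans (le_iSup (fun x => (‖iteratedFDeriv ℝ l f x‖₊ : ℝ≥0∞)) x) ?_
  exact Finset.single_le_sum
    (f := fun k => ⨆ x, (‖iteratedFDeriv ℝ k f x‖₊ : ℝ≥0∞)) (fun _ _ => zero_le)
    (Finset.mem_range.2 (Nat.lt_succ_of_le hl))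

/-- Extensions nearly realizing the norm on a set. -/
lemma exists_hz_extension {S : Set E} {a : ℝ} {f : E → F} (hfin : hzNormOn S a f ≠ ⊤)
    {δ : ℝ} (hδ : 0 < δ) : ∃ g : E → F, EqOn f g S ∧ ContDiff ℝ ((⌈a⌉₊ - 1 : ℕ) : ℕ∞) g ∧
      hzNorm a g ≤ ENNReal.ofReal ((hzNormOn S a f).toReal + δ) := by
  have hlt : hzNormOn S a f < ENNReal.ofReal ((hzNormOn S a f).toReal + δ) := by
    rw [ENNReal.lt_ofReal_iff_toReal_lt hfin]; linarith
  unfold hzNormOn at hlt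
  simp only [iInf_lt_iff] at hlt
  obtain ⟨g, h1, h2, h3⟩ := hlt
  exact ⟨g, h1, h2, h3.le⟩

end assembly

/-- The composition estimate in terms of real numbers, with the sharp Lipschitz factor
`(sup ‖∇g‖) ^ a` in front of the norm of `u`. -/
lemma hzNormOn_comp_le {N M : ℕ}
    {D : Set (EuclideanSpace ℝ (Fin N))} {Dt : Set (EuclideanSpace ℝ (Fin M))}
    (hD : IsOpen D) (hDb : Bornology.IsBounded D) (hDl : LipschitzBoundary D)
    (hDt : IsOpen Dt) (hDtb : Bornology.IsBounded Dt) (hDtl : LipschitzBoundary Dt)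
    (K : ℝ≥0) {a : ℝ} (ha : 1 < a) :
    ∃ C : ℝ, 0 ≤ C ∧ ∀ (g : EuclideanSpace ℝ (Fin N) → EuclideanSpace ℝ (Fin M))
        (u : EuclideanSpace ℝ (Fin M) → ℂ),
        MapsTo g D Dt → gradSup D g ≤ (K : ℝ≥0∞) →
        hzNormOn (closure Dt) a u ≠ ⊤ → hzNormOn (closure D) a g ≠ ⊤ →
        gradSup Dt u ≠ ⊤ ∧ supNormOn Dt u ≠ ⊤ ∧
        hzNormOn (closure D) a (u ∘ g) ≤ ENNReal.ofReal (C *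
          ((hzNormOn (closure Dt) a u).toReal * (gradSup D g).toReal ^ a
            + (gradSup Dt u).toReal * (hzNormOn (closure D) a g).toReal
            + (supNormOn Dt u).toReal)) := by
  obtain ⟨k, hk⟩ : ∃ k : ℕ, k = ⌈a⌉₊ - 1 := ⟨_, rfl⟩
  have hceil : 1 < ⌈a⌉₊ := Nat.lt_ceil.2 (by simpa using ha)
  have hk1 : 1 ≤ k := by omega
  have hka : (k : ℝ) < a := Nat.lt_ceil.1 (by omega)
  have hak : a ≤ k + 1 := by
    have := Nat.le_ceil a
    have e : ⌈a⌉₊ = k + 1 := by omega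
    rw [e] at this
    exact_mod_cast this
  obtain ⟨R, c, r₀, hR, hc, hr₀, hcone⟩ := exists_uniform_cone hDt hDtb hDtl
  obtain ⟨C₁, hC₁, hcomp⟩ := norm_fwdDiff_comp_le (EuclideanSpace ℝ (Fin N))
    (EuclideanSpace ℝ (Fin M)) ℂ hka hak R c r₀ hR.le hc Dt hcone
  have hK1 : (0 : ℝ) < K + 1 := by positivity
  obtain ⟨C₂, hC₂, hext⟩ := exists_extension hD hDb hDl ℂ (compOrder k) hk hka hak
    (κ := r₀ / (K + 1)) (by positivity)
  refine ⟨C₂ * (C₁ + 1), by positivity, fun g u hgm hgK hu hg => ?_⟩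
  set L := (gradSup D g).toReal with hL
  have hgfin : gradSup D g ≠ ⊤ := ne_top_of_le_ne_top ENNReal.coe_ne_top hgK
  have hL0 : 0 ≤ L := ENNReal.toReal_nonneg
  have hLK : L ≤ K := by
    have := ENNReal.toReal_mono ENNReal.coe_ne_top hgK
    simpa using this
  -- finiteness of the first-order quantities for `u`
  have hfin : gradSup Dt u ≠ ⊤ ∧ supNormOn Dt u ≠ ⊤ := by
    obtain ⟨U, hUe, -, hUn⟩ := exists_hz_extension hu one_pos
    constructor
    · refine ne_top_of_le_ne_top ENNReal.ofReal_ne_top (le_trans ?_ hUn)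
      refine iSup₂_le fun x hx => ?_
      have e : u =ᶠ[nhds x] U :=
        Filter.eventuallyEq_of_mem (hDt.mem_nhds hx) (hUe.mono subset_closure)
      rw [e.iteratedFDeriv ℝ 1 |>.eq_of_nhds]
      exact iSup_iteratedFDeriv_le_hzNorm (by omega) U x
    · refine ne_top_of_le_ne_top ENNReal.ofReal_ne_top (le_trans ?_ hUn)
      refine iSup₂_le fun x hx => ?_
      rw [hUe (subset_closure hx)]
      refine le_trans (le_of_eq ?_) (iSup_iteratedFDeriv_le_hzNorm (l := 0) (by omega) U x)
      congr 1
      exact NNReal.eq norm_iteratedFDeriv_zero.symm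
  refine ⟨hfin.1, hfin.2, ?_⟩
  set B := (gradSup Dt u).toReal with hB
  set S := (supNormOn Dt u).toReal with hS
  have hB0 : 0 ≤ B := ENNReal.toReal_nonneg
  have hS0 : 0 ≤ S := ENNReal.toReal_nonneg
  set α := (hzNormOn (closure Dt) a u).toReal with hα
  set α' := (hzNormOn (closure D) a g).toReal with hα'
  have hα0 : 0 ≤ α := ENNReal.toReal_nonneg
  have hα'0 : 0 ≤ α' := ENNReal.toReal_nonneg
  have key : ∀ δ : ℝ, 0 < δ → hzNormOn (closure D) a (u ∘ g) ≤ ENNReal.ofReal (C₂ * (C₁ + 1) *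
      ((α + δ) * L ^ a + B * (α' + δ) + S)) := by
    intro δ hδ
    obtain ⟨U, hUe, hUc, hUn⟩ := exists_hz_extension hu hδ
    obtain ⟨G, hGe, hGc, hGn⟩ := exists_hz_extension hg hδ
    rw [← hk] at hUc hGc
    have hUc' : ContDiff ℝ (k : ℕ∞ω) U := by exact_mod_cast hUc
    have hGc' : ContDiff ℝ (k : ℕ∞ω) G := by exact_mod_cast hGc
    have hk1' : (k : ℕ∞ω) ≠ 0 := by exact_mod_cast (by omega : k ≠ 0)
    obtain ⟨hU1, hU2⟩ := norm_fwdDiff_le_of_hzNorm hk hka hUc' (by positivity) hUn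
    obtain ⟨hG1, hG2⟩ := norm_fwdDiff_le_of_hzNorm hk hka hGc' (by positivity) hGn
    have hGm : MapsTo G D Dt := fun x hx => by
      rw [← hGe (subset_closure hx)]; exact hgm hx
    have hGmc : MapsTo G (closure D) (closure Dt) := hGm.closure hGc.continuous
    set X := C₁ * ((α + δ) * L ^ a + B * (α' + δ)) with hX
    have hX0 : 0 ≤ X := by positivity
    obtain ⟨W, hWc, hWe, hWn⟩ := hext X S (U ∘ G) hX0 hS0
      (hUc.continuous.comp hGc.continuous)
      (fun x y hxy hy => hcomp D U G (α + δ) (α' + δ) B L hUc.continuous hU1 hU2 hGc.continuous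
        hG1 hG2 hGm hB0 hL0
        (fun z hz => ⟨hUc'.differentiable hk1' z,
          norm_fderiv_le_gradSup hDt (hUe.mono subset_closure) hfin.1 hz⟩)
        (fun z hz => ⟨hGc'.differentiable hk1' z,
          norm_fderiv_le_gradSup hD (hGe.mono subset_closure) hgfin hz⟩) x y hxy (by
          rw [le_div_iff₀ hK1] at hy
          nlinarith [norm_nonneg y]))
      (fun x hx => by
        rw [Function.comp_apply, ← hUe (subset_closure (hGm hx))]
        exact norm_le_supNormOn hfin.2 (hGm hx))
    have hug : EqOn (u ∘ g) W (closure D) := fun x hx => by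
      rw [← hWe hx, Function.comp_apply, Function.comp_apply, hGe hx, hUe (hGmc hx)]
    rw [hk] at hWc
    have hle : hzNormOn (closure D) a (u ∘ g) ≤ hzNorm a W := by
      unfold hzNormOn
      exact iInf_le_of_le W (iInf_le_of_le hug (iInf_le_of_le hWc le_rfl))
    refine hle.trans (hWn.trans (ENNReal.ofReal_le_ofReal ?_))
    rw [mul_assoc]
    refine mul_le_mul_of_nonneg_left ?_ hC₂
    have hP : 0 ≤ (α + δ) * L ^ a + B * (α' + δ) := by positivity
    nlinarith
  have hcont : Continuous fun δ : ℝ => ENNReal.ofReal (C₂ * (C₁ + 1) *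
      ((α + δ) * L ^ a + B * (α' + δ) + S)) := ENNReal.continuous_ofReal.comp (by fun_prop)
  have hlim := (hcont.tendsto 0).mono_left (nhdsWithin_le_nhds (s := Ioi 0))
  simp only [add_zero] at hlim
  exact ge_of_tendsto hlim (Filter.eventually_of_mem self_mem_nhdsWithin fun δ hδ => key δ hδ)

end

/-- chain rule in the Zygmund space `Λ^a`, `a > 1`:
`|u∘g|_{D,a} ≤ C_a(D) C_a(D̃) (C_{1/ε} |u|_{D̃,a} ‖g‖_{D,1+ε}^{1/(1+ε)}
  + ‖u‖_{D̃,1} |g|_{D,a} + sup_{D̃}|u|)`. -/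
theorem statement_12 (N M : ℕ)
    (D : Set (EuclideanSpace ℝ (Fin N))) (Dt : Set (EuclideanSpace ℝ (Fin M)))
    (hD : IsOpen D) (hDb : Bornology.IsBounded D) (hDl : LipschitzBoundary D)
    (hDt : IsOpen Dt) (hDtb : Bornology.IsBounded Dt) (hDtl : LipschitzBoundary Dt)
    (K : ℝ≥0) (a : ℝ) (ha : 1 < a) (ε : ℝ) (hε0 : 0 < ε) (hε1 : ε < 1) :
    ∃ C₁ C₂ Cε : ℝ≥0, 0 < C₁ ∧ 0 < C₂ ∧ 0 < Cε ∧
      ∀ (g : EuclideanSpace ℝ (Fin N) → EuclideanSpace ℝ (Fin M))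
        (u : EuclideanSpace ℝ (Fin M) → ℂ),
        Set.MapsTo g D Dt → holderNorm D 1 g ≤ (K : ℝ≥0∞) →
        hzNormOn (closure Dt) a u ≠ ⊤ → hzNormOn (closure D) a g ≠ ⊤ →
        hzNormOn (closure D) a (u ∘ g)
          ≤ (C₁ : ℝ≥0∞) * (C₂ : ℝ≥0∞) *
            ((Cε : ℝ≥0∞) * hzNormOn (closure Dt) a u
                * holderNorm D (1 + ε) g ^ ((1 : ℝ) / (1 + ε))
              + holderNorm Dt 1 u * hzNormOn (closure D) a g
              + supNormOn Dt u) := by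
  obtain ⟨C, hC, hmain⟩ := hzNormOn_comp_le hD hDb hDl hDt hDtb hDtl K ha
  set θ : ℝ := 1 / (1 + ε) with hθ
  have hθ0 : 0 ≤ θ := by positivity
  have hθ1 : θ ≤ 1 := by rw [hθ, div_le_one (by linarith)]; linarith
  refine ⟨C.toNNReal + 1, 1, K ^ (a - θ) + 1, by positivity, one_pos, by positivity, ?_⟩
  intro g u hgm hgK hu hg
  obtain ⟨hBf, hSf, hle⟩ := hmain g u hgm ((gradSup_le_holderNorm D g le_rfl).trans hgK) hu hg
  have hgf : gradSup D g ≠ ⊤ :=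
    ne_top_of_le_ne_top ENNReal.coe_ne_top ((gradSup_le_holderNorm D g le_rfl).trans hgK)
  refine hle.trans ?_
  -- `a > 1 ≥ θ`, so the surplus `a - θ` of the power of `sup ‖∇g‖ ≤ K` goes into the constant
  have hpow : gradSup D g ^ a ≤
      ((K ^ (a - θ) + 1 : ℝ≥0) : ℝ≥0∞) * holderNorm D (1 + ε) g ^ θ := by
    have e : a = (a - θ) + θ := by ring
    rw [e, ENNReal.rpow_add_of_nonneg _ _ (by linarith) hθ0, ← e]
    refine mul_le_mul' ?_ (ENNReal.rpow_le_rpow (gradSup_le_holderNorm D g (by linarith)) hθ0)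
    rw [ENNReal.coe_add, ENNReal.coe_rpow_of_nonneg _ (by linarith)]
    exact (ENNReal.rpow_le_rpow ((gradSup_le_holderNorm D g le_rfl).trans hgK)
      (by linarith)).trans le_self_add
  rw [ENNReal.ofReal_mul hC, ENNReal.ofReal_add (by positivity) (by positivity),
    ENNReal.ofReal_add (by positivity) (by positivity), ENNReal.ofReal_mul (by positivity),
    ENNReal.ofReal_mul (by positivity), ENNReal.ofReal_toReal hu, ENNReal.ofReal_toReal hg,
    ENNReal.ofReal_toReal hBf, ENNReal.ofReal_toReal hSf, ENNReal.toReal_rpow,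
    ENNReal.ofReal_toReal (ENNReal.rpow_ne_top_of_nonneg (by linarith) hgf)]
  refine mul_le_mul' ?_ (add_le_add (add_le_add ?_ ?_) le_rfl)
  · rw [ENNReal.coe_one, mul_one, ENNReal.coe_add]
    exact le_self_add
  · calc hzNormOn (closure Dt) a u * gradSup D g ^ a
        ≤ hzNormOn (closure Dt) a u *
          (((K ^ (a - θ) + 1 : ℝ≥0) : ℝ≥0∞) * holderNorm D (1 + ε) g ^ θ) :=
          mul_le_mul_right hpow _
      _ = _ := by ring
  · exact mul_le_mul' (gradSup_le_holderNorm Dt u le_rfl) le_rfl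

end
end

section
/- Let ξ > 0 and 1 < d < 2, and let 𝒟(ξ, d) = { (α, β) ∈ ℝ² : α·d + β < ξ, α·(2−d) > 1/2, β·(d−1) > 1/2 }. Then 𝒟(ξ, d) is nonempty if and only if ξ > p(d), where p(d) = d/(2(2−d)) + 1/(2(d−1)). Consequently, there exist α, β > 0 and d ∈ (1,2) satisfying these three inequalities if and only if ξ > 1 + √2. -/
/-!
For fixed `d ∈ (1,2)` the last two constraints read `α > 1/(2(2-d))` and `β > 1/(2(d-1))`, so
`p(d)` is the infimum of `αd + β` over them, and it is not attained: the region is nonempty iff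
`ξ > p(d)` (`paramRegion_nonempty_iff`). Optimising over `d` rests on the identity
`p(d) - (1 + √2) = (3 + 2√2)(d - √2)² / (2(2-d)(d-1))`, which shows that the minimum of `p` is
`1 + √2`, attained at `d = √2`.
-/

noncomputable section

/-- The function `p(d) = d/(2(2−d)) + 1/(2(d−1))`. -/
def iterP (d : ℝ) : ℝ := d / (2 * (2 - d)) + 1 / (2 * (d - 1))

/-- The parameter region `𝒟(ξ, d)` of the Nash–Moser iteration. -/
def paramRegion (ξ d : ℝ) : Set (ℝ × ℝ) :=
  {p : ℝ × ℝ | p.1 * d + p.2 < ξ ∧ p.1 * (2 - d) > 1 / 2 ∧ p.2 * (d - 1) > 1 / 2}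

theorem paramRegion_nonempty_iff {ξ d : ℝ} (h1 : 1 < d) (h2 : d < 2) :
    (paramRegion ξ d).Nonempty ↔ ξ > iterP d := by
  have hu : 0 < 2 - d := by linarith
  have hv : 0 < d - 1 := by linarith
  have hp : iterP d = 1 / 2 / (2 - d) * d + 1 / 2 / (d - 1) := by
    unfold iterP
    field_simp
  rw [hp]
  constructor
  · rintro ⟨⟨α, β⟩, h, hα, hβ⟩
    have hα' : 1 / 2 / (2 - d) < α := (div_lt_iff₀ hu).2 hα
    have hβ' : 1 / 2 / (d - 1) < β := (div_lt_iff₀ hv).2 hβ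
    have := mul_lt_mul_of_pos_right hα' (by linarith : 0 < d)
    simp only at h
    linarith
  · intro h
    -- Raise both lower bounds by the same `ε`; this costs `ε (d + 1) < 3 ε`.
    obtain ⟨ε, hε⟩ : ∃ ε, ε = (ξ - (1 / 2 / (2 - d) * d + 1 / 2 / (d - 1))) / 3 := ⟨_, rfl⟩
    have hε0 : 0 < ε := by rw [hε]; linarith
    refine ⟨(1 / 2 / (2 - d) + ε, 1 / 2 / (d - 1) + ε), ?_, ?_, ?_⟩
    · have := mul_lt_mul_of_pos_left h2 hε0
      simp only
      linarith
    · exact (div_lt_iff₀ hu).1 (by simpa using hε0)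
    · exact (div_lt_iff₀ hv).1 (by simpa using hε0)

theorem iterP_sub_min {d : ℝ} (h1 : 1 < d) (h2 : d < 2) :
    iterP d - (1 + √2) = (3 + 2 * √2) * (d - √2) ^ 2 / (2 * (2 - d) * (d - 1)) := by
  have hu : 2 - d ≠ 0 := by linarith
  have hv : d - 1 ≠ 0 := by linarith
  have hs : √2 ^ 2 = 2 := Real.sq_sqrt (by norm_num)
  unfold iterP
  field_simp
  linear_combination (4 * d - 2 * √2 - 3) * hs

/-- for `ξ > 0` and `1 < d < 2`, the region
`𝒟(ξ,d) = {(α,β) : αd + β < ξ, α(2−d) > 1/2, β(d−1) > 1/2}` is nonempty iff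
`ξ > p(d)`; consequently, there exist `α, β > 0` and `d ∈ (1,2)` satisfying the
three inequalities iff `ξ > 1 + √2`. -/
theorem statement_18 :
    (∀ ξ d : ℝ, 0 < ξ → 1 < d → d < 2 →
      ((paramRegion ξ d).Nonempty ↔ ξ > iterP d)) ∧
    (∀ ξ : ℝ, 0 < ξ →
      ((∃ α β d : ℝ, 0 < α ∧ 0 < β ∧ 1 < d ∧ d < 2 ∧
          α * d + β < ξ ∧ α * (2 - d) > 1 / 2 ∧ β * (d - 1) > 1 / 2)
        ↔ ξ > 1 + Real.sqrt 2)) := by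
  refine ⟨fun ξ d _ h1 h2 => paramRegion_nonempty_iff h1 h2, fun ξ _ => ⟨?_, fun h => ?_⟩⟩
  · rintro ⟨α, β, d, -, -, h1, h2, h⟩
    have hp : ξ > iterP d := (paramRegion_nonempty_iff h1 h2).1 ⟨(α, β), h⟩
    have hm := iterP_sub_min h1 h2
    have : 0 ≤ (3 + 2 * √2) * (d - √2) ^ 2 / (2 * (2 - d) * (d - 1)) := by
      have hu : 0 < 2 - d := by linarith
      have hv : 0 < d - 1 := by linarith
      positivity
    linarith
  · have h1 : 1 < √2 := Real.one_lt_sqrt_two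
    have h2 : √2 < 2 := by linarith [Real.sqrt_two_lt_three_halves]
    have hm := iterP_sub_min h1 h2
    rw [sub_self, zero_pow two_ne_zero, mul_zero, zero_div, sub_eq_zero] at hm
    obtain ⟨⟨α, β⟩, hs, hα, hβ⟩ := (paramRegion_nonempty_iff h1 h2).2 (hm ▸ h)
    simp only at hs hα hβ
    -- Positivity of `α` and `β` is automatic from the last two constraints.
    refine ⟨α, β, √2, ?_, ?_, h1, h2, hs, hα, hβ⟩
    · exact pos_of_mul_pos_left (by linarith : 0 < α * (2 - √2)) (by linarith)
    · exact pos_of_mul_pos_left (by linarith : 0 < β * (√2 - 1)) (by linarith)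

end
end

section
/- Let 1 < d < 2 and let ξ ≥ p(d), where p(d) = d/(2(2−d)) + 1/(2(d−1)). Consider the compact set K = { (α, β) ∈ ℝ² : α·d + β ≤ ξ, α·(2−d) ≥ 1/2, β·(d−1) ≥ 1/2 }, which is nonempty. Then the function ℓ̃(α, β) = (ξ + 1/2)/((α/β) + 1) attains its minimum over K at the point (α∞, β∞) with β∞ = 1/(2(d−1)) and α∞ = (ξ − β∞)/d, and the minimum value equals (1/2)·(1 + 1/(d−1)). -/
/-!
Write `b = 1/(2(d-1))`, so that `b(d-1) = 1/2`. On `K` both coordinates are positive and at most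
`ξ`, so the closed set `K` is bounded, hence compact. The value at `(α∞, β∞)` is `d b`. For any
`(α, β) ∈ K`, the inequality `d b ≤ ℓ̃(α, β)` amounts to `d b (α + β) ≤ (ξ + 1/2) β`, and
`d b (α + β) = b (α d + β) + b (d-1) β ≤ β ξ + β/2` because `b ≤ β` and `α d + β ≤ ξ`.
-/

noncomputable section

/-- The closed parameter region `K`. -/
def closedParamRegion (ξ d : ℝ) : Set (ℝ × ℝ) :=
  {p : ℝ × ℝ | p.1 * d + p.2 ≤ ξ ∧ p.1 * (2 - d) ≥ 1 / 2 ∧ p.2 * (d - 1) ≥ 1 / 2}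

/-- The quantity `ℓ̃(α,β) = (ξ + 1/2)/((α/β) + 1)`. -/
def ellTilde (ξ α β : ℝ) : ℝ := (ξ + 1 / 2) / (α / β + 1)

/-- for `1 < d < 2` and `ξ ≥ p(d)`, the compact set
`K = {(α,β) : αd + β ≤ ξ, α(2−d) ≥ 1/2, β(d−1) ≥ 1/2}` is nonempty, it is
compact, and `ℓ̃(α,β) = (ξ+1/2)/((α/β)+1)` attains its minimum over `K` at
`(α∞, β∞)` with `β∞ = 1/(2(d−1))`, `α∞ = (ξ − β∞)/d`, the minimum value being
`(1/2)(1 + 1/(d−1))`. -/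
theorem statement_19 (d ξ : ℝ) (hd1 : 1 < d) (hd2 : d < 2) (hξ : iterP d ≤ ξ) :
    IsCompact (closedParamRegion ξ d) ∧
    (closedParamRegion ξ d).Nonempty ∧
    ((ξ - 1 / (2 * (d - 1))) / d, 1 / (2 * (d - 1))) ∈ closedParamRegion ξ d ∧
    (∀ p ∈ closedParamRegion ξ d,
      ellTilde ξ ((ξ - 1 / (2 * (d - 1))) / d) (1 / (2 * (d - 1))) ≤ ellTilde ξ p.1 p.2) ∧
    ellTilde ξ ((ξ - 1 / (2 * (d - 1))) / d) (1 / (2 * (d - 1)))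
      = (1 / 2) * (1 + 1 / (d - 1)) := by
  have hd0 : 0 < d := by linarith
  have hd1' : 0 < d - 1 := by linarith
  have hd2' : 0 < 2 - d := by linarith
  unfold iterP at hξ
  set b := 1 / (2 * (d - 1)) with hb
  have hbpos : 0 < b := by positivity
  have hbmul : b * (d - 1) = 1 / 2 := by rw [hb]; field_simp
  have hξpos : 0 < ξ := by
    have : 0 < d / (2 * (2 - d)) := by positivity
    linarith
  have hmem : ((ξ - b) / d, b) ∈ closedParamRegion ξ d := by
    refine ⟨?_, ?_, hbmul.ge⟩
    · simp only
      rw [div_mul_cancel₀ _ hd0.ne']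
      linarith
    · have h : d / (2 * (2 - d)) ≤ ξ - b := by linarith
      rw [div_le_iff₀ (by positivity)] at h
      simp only [ge_iff_le]
      rw [div_mul_eq_mul_div, le_div_iff₀ hd0]
      linarith
  have hpos : ∀ p ∈ closedParamRegion ξ d, 0 < p.1 ∧ 0 < p.2 := by
    rintro p ⟨-, h2, h3⟩
    exact ⟨pos_of_mul_pos_left (by linarith : 0 < p.1 * (2 - d)) hd2'.le,
      pos_of_mul_pos_left (by linarith : 0 < p.2 * (d - 1)) hd1'.le⟩
  have hval : ellTilde ξ ((ξ - b) / d) b = d * b := by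
    -- `d * b * (α∞ / β∞ + 1) = ξ - b + d * b`, and `(d - 1) * b = 1 / 2`.
    have h : (ξ - b) / d / b + 1 = (ξ + 1 / 2) / (d * b) := by
      rw [← hbmul]
      field_simp
      ring
    unfold ellTilde
    rw [h, div_div_cancel₀ (by positivity)]
  refine ⟨?_, ⟨_, hmem⟩, hmem, ?_, ?_⟩
  · refine IsCompact.of_isClosed_subset
      (isCompact_Icc (a := ((0, 0) : ℝ × ℝ)) (b := (ξ, ξ))) ?_ ?_
    · have c1 : IsClosed {p : ℝ × ℝ | p.1 * d + p.2 ≤ ξ} :=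
        isClosed_le (by fun_prop) (by fun_prop)
      have c2 : IsClosed {p : ℝ × ℝ | 1 / 2 ≤ p.1 * (2 - d)} :=
        isClosed_le (by fun_prop) (by fun_prop)
      have c3 : IsClosed {p : ℝ × ℝ | 1 / 2 ≤ p.2 * (d - 1)} :=
        isClosed_le (by fun_prop) (by fun_prop)
      exact c1.inter (c2.inter c3)
    · intro p hp
      obtain ⟨h1, h2⟩ := hpos p hp
      have h3 := hp.1
      have h4 : 0 < p.1 * (d - 1) := by positivity
      have h5 : 0 < p.1 * d := by positivity
      exact ⟨⟨h1.le, h2.le⟩, ⟨by simp only; linarith, by simp only; linarith⟩⟩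
  · intro p hp
    obtain ⟨h1, h2⟩ := hpos p hp
    obtain ⟨h3, -, h4⟩ := hp
    have hbp : b ≤ p.2 := le_of_mul_le_mul_right (hbmul.le.trans h4) hd1'
    have key : d * b * (p.1 + p.2) ≤ (ξ + 1 / 2) * p.2 :=
      calc d * b * (p.1 + p.2) = b * (p.1 * d + p.2) + b * (d - 1) * p.2 := by ring
        _ ≤ p.2 * ξ + 1 / 2 * p.2 := by
          rw [hbmul]
          gcongr
        _ = (ξ + 1 / 2) * p.2 := by ring
    rw [hval]
    unfold ellTilde
    rw [le_div_iff₀ (by positivity), div_add_one h2.ne', mul_div_assoc', div_le_iff₀ h2]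
    exact key
  · rw [hval, hb]
    field_simp
    ring

end
end
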